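/- arXiv:2007.00132 — 3 statements merged into one kernel-verified Lean document; each statement's English description precedes it below -/
import Mathlib

section
/- Let P be a real n×n̄ matrix, Q̄ a symmetric positive definite n̄×n̄ matrix, and let 𝒟 = { Pz : z ∈ ℝ^{n̄}, zᵀQ̄z ≤ 1 }. Let X be a symmetric n×n matrix, x ∈ ℝ^n, and ξ ∈ ℝ. Then ζᵀXζ + 2xᵀζ ≤ ξ holds for every ζ ∈ 𝒟 if and only if there exists λ ≥ 0 such that the block matrix [[λQ̄ − PᵀXP, −Pᵀx],[−xᵀP, ξ − λ]] is positive semidefinite. -/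
open Matrix BigOperators

noncomputable section

/-- A quadratic polynomial with positive constant term and negative leading coefficient
has a positive root. -/
lemma exists_pos_root_of_pos_of_neg {a c : ℝ} (b : ℝ) (ha : 0 < a) (hc : c < 0) :
    ∃ t : ℝ, 0 < t ∧ a + t * b + t ^ 2 * c = 0 := by
  have hd : 0 < -(a * c) := by nlinarith
  have hs : √(b ^ 2 - 4 * (a * c)) ^ 2 = b ^ 2 - 4 * (a * c) :=
    Real.sq_sqrt (by nlinarith [sq_nonneg b])
  have hlt : |b| < √(b ^ 2 - 4 * (a * c)) := by
    rw [← Real.sqrt_sq_eq_abs]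
    exact Real.sqrt_lt_sqrt (sq_nonneg b) (by linarith)
  set s := √(b ^ 2 - 4 * (a * c))
  have hbs : 0 < b + s := by linarith [neg_abs_le b]
  refine ⟨(b + s) / (-(2 * c)), div_pos hbs (by linarith), ?_⟩
  have hc' : c ≠ 0 := hc.ne
  field_simp
  linear_combination hs

/-- The restriction of a quadratic form to a line. -/
lemma QuadraticMap.map_add_smul_right {V : Type*} [AddCommGroup V] [Module ℝ V]
    (f : QuadraticForm ℝ V) (u v : V) (t : ℝ) :
    f (u + t • v) = f u + t * QuadraticMap.polar f u v + t ^ 2 * f v := by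
  rw [QuadraticMap.map_add f, QuadraticMap.polar_smul_right, QuadraticMap.map_smul]
  simp only [smul_eq_mul]
  ring

/-- If `f` is nonnegative wherever `g` is, the ratio `f / g` on `{g < 0}` is bounded above by
its values on `{0 < g}`. -/
lemma QuadraticForm.mul_le_mul_of_nonneg_imp {V : Type*} [AddCommGroup V] [Module ℝ V]
    (f g : QuadraticForm ℝ V) (h : ∀ v, 0 ≤ g v → 0 ≤ f v) {u v : V}
    (hu : 0 < g u) (hv : g v < 0) : f u * g v ≤ f v * g u := by
  set H := g u * QuadraticMap.polar f u v - f u * QuadraticMap.polar g u v with hH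
  obtain ⟨t, ht0, htH, hroot⟩ : ∃ t : ℝ, t ≠ 0 ∧ t * H ≤ 0 ∧
      g u + t * QuadraticMap.polar g u v + t ^ 2 * g v = 0 := by
    rcases le_total H 0 with hle | hle
    · obtain ⟨t, ht, hr⟩ := exists_pos_root_of_pos_of_neg (QuadraticMap.polar g u v) hu hv
      exact ⟨t, ht.ne', mul_nonpos_of_nonneg_of_nonpos ht.le hle, hr⟩
    · obtain ⟨t, ht, hr⟩ := exists_pos_root_of_pos_of_neg (-QuadraticMap.polar g u v) hu hv
      exact ⟨-t, neg_ne_zero.2 ht.ne', by nlinarith, by linear_combination hr⟩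
  have hf : 0 ≤ f (u + t • v) :=
    h _ (by rw [QuadraticMap.map_add_smul_right, hroot])
  rw [QuadraticMap.map_add_smul_right] at hf
  have hfg := mul_nonneg hu.le hf
  have ht2 : 0 < t ^ 2 := by positivity
  have key : 0 ≤ t ^ 2 * (f v * g u - f u * g v) := by
    have : t ^ 2 * (f v * g u - f u * g v)
        = g u * (f u + t * QuadraticMap.polar f u v + t ^ 2 * f v) - t * H := by
      rw [hH]
      linear_combination (-f u) * hroot
    linarith
  linarith [nonneg_of_mul_nonneg_right key ht2]

/-- The homogeneous S-lemma. -/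
theorem QuadraticForm.exists_nonneg_mul_le {V : Type*} [AddCommGroup V] [Module ℝ V]
    (f g : QuadraticForm ℝ V) (h : ∀ v, 0 ≤ g v → 0 ≤ f v) (hg : ∃ u, 0 < g u) :
    ∃ c : ℝ, 0 ≤ c ∧ ∀ v, c * g v ≤ f v := by
  obtain ⟨u₀, hu₀⟩ := hg
  have : Nonempty {u // 0 < g u} := ⟨⟨u₀, hu₀⟩⟩
  have hnonneg : ∀ u : {u // 0 < g u}, 0 ≤ f u / g u := fun u =>
    div_nonneg (h _ u.2.le) u.2.le
  refine ⟨⨅ u : {u // 0 < g u}, f u / g u, le_ciInf hnonneg, fun v => ?_⟩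
  rcases lt_trichotomy (g v) 0 with hv | hv | hv
  · rw [← div_le_iff_of_neg hv]
    refine le_ciInf fun u => ?_
    rw [le_div_iff₀ u.2, div_mul_eq_mul_div, div_le_iff_of_neg hv]
    exact QuadraticForm.mul_le_mul_of_nonneg_imp f g h u.2 hv
  · rw [hv, mul_zero]
    exact h v hv.ge
  · rw [← le_div_iff₀ hv]
    exact ciInf_le ⟨0, Set.forall_mem_range.2 hnonneg⟩ (⟨v, hv⟩ : {u // 0 < g u})

/-- The quadratic form of a square matrix bordered by the same vector as last row and column. -/
lemma Matrix.dotProduct_fromBlocks_unit_mulVec {m : Type*} [Fintype m]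
    (A : Matrix m m ℝ) (b : m → ℝ) (d : ℝ) (w : m ⊕ Unit → ℝ) :
    w ⬝ᵥ fromBlocks A (of fun i (_ : Unit) => b i) (of fun (_ : Unit) j => b j)
        (of fun _ _ => d) *ᵥ w
      = (w ∘ Sum.inl) ⬝ᵥ A *ᵥ (w ∘ Sum.inl) + 2 * w (Sum.inr ()) * (b ⬝ᵥ (w ∘ Sum.inl))
        + d * w (Sum.inr ()) ^ 2 := by
  have hb : ∑ i, w (Sum.inl i) * (b i * w (Sum.inr ()))
      = w (Sum.inr ()) * ∑ i, b i * w (Sum.inl i) := by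
    rw [Finset.mul_sum]
    exact Finset.sum_congr rfl fun i _ => by ring
  simp only [dotProduct, Fintype.sum_sum_type, mulVec, fromBlocks_apply₁₁, fromBlocks_apply₁₂,
    fromBlocks_apply₂₁, fromBlocks_apply₂₂, of_apply, Function.comp_apply, mul_add,
    Finset.sum_add_distrib, Finset.univ_unique, Finset.sum_singleton, PUnit.default_eq_unit, hb]
  ring

theorem stmt14 {n nb : ℕ}
    (P : Matrix (Fin n) (Fin nb) ℝ)
    (Qb : Matrix (Fin nb) (Fin nb) ℝ) (hQb : Qb.PosDef)
    (X : Matrix (Fin n) (Fin n) ℝ) (hX : X.IsSymm) (x : Fin n → ℝ) (ξ : ℝ) :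
    (∀ ζ ∈ {w : Fin n → ℝ | ∃ z : Fin nb → ℝ, z ⬝ᵥ Qb *ᵥ z ≤ 1 ∧ w = P *ᵥ z},
        ζ ⬝ᵥ X *ᵥ ζ + 2 * (x ⬝ᵥ ζ) ≤ ξ) ↔
      (∃ lam : ℝ, 0 ≤ lam ∧
        (Matrix.fromBlocks (lam • Qb - Pᵀ * X * P)
          (Matrix.of fun i (_ : Unit) => -(Pᵀ *ᵥ x) i)
          (Matrix.of fun (_ : Unit) j => -(Pᵀ *ᵥ x) j)
          (Matrix.of fun _ _ => ξ - lam)).PosSemidef) := by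
  have hquad : ∀ z : Fin nb → ℝ,
      z ⬝ᵥ (Pᵀ * X * P) *ᵥ z = (P *ᵥ z) ⬝ᵥ X *ᵥ (P *ᵥ z) := fun z => by
    rw [← mulVec_mulVec, ← mulVec_mulVec, dotProduct_mulVec, vecMul_transpose]
  have hlin : ∀ z : Fin nb → ℝ, (-(Pᵀ *ᵥ x)) ⬝ᵥ z = -(x ⬝ᵥ P *ᵥ z) := fun z => by
    rw [neg_dotProduct, mulVec_transpose, ← dotProduct_mulVec]
  have hblock : ∀ (lam : ℝ) (w : Fin nb ⊕ Unit → ℝ),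
      w ⬝ᵥ fromBlocks (lam • Qb - Pᵀ * X * P) (of fun i (_ : Unit) => -(Pᵀ *ᵥ x) i)
        (of fun (_ : Unit) j => -(Pᵀ *ᵥ x) j) (of fun _ _ => ξ - lam) *ᵥ w
      = lam * ((w ∘ Sum.inl) ⬝ᵥ Qb *ᵥ (w ∘ Sum.inl))
        - (P *ᵥ (w ∘ Sum.inl)) ⬝ᵥ X *ᵥ (P *ᵥ (w ∘ Sum.inl))
        - 2 * w (Sum.inr ()) * (x ⬝ᵥ P *ᵥ (w ∘ Sum.inl))
        + (ξ - lam) * w (Sum.inr ()) ^ 2 := fun lam w => by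
    have := dotProduct_fromBlocks_unit_mulVec (lam • Qb - Pᵀ * X * P) (-(Pᵀ *ᵥ x)) (ξ - lam) w
    simp only [Pi.neg_apply] at this
    rw [this, hlin, sub_mulVec, dotProduct_sub, hquad, smul_mulVec, dotProduct_smul, smul_eq_mul]
    ring
  constructor
  · intro h
    let f : QuadraticForm ℝ (Fin nb ⊕ Unit → ℝ) := Matrix.toQuadraticForm'
      (fromBlocks ((0 : ℝ) • Qb - Pᵀ * X * P) (of fun i (_ : Unit) => -(Pᵀ *ᵥ x) i)
        (of fun (_ : Unit) j => -(Pᵀ *ᵥ x) j) (of fun _ _ => ξ - 0))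
    let g : QuadraticForm ℝ (Fin nb ⊕ Unit → ℝ) := Matrix.toQuadraticForm'
      (fromBlocks (-Qb) (of fun _ (_ : Unit) => 0) (of fun (_ : Unit) _ => 0) (of fun _ _ => 1))
    have hf : ∀ w, f w = - ((P *ᵥ (w ∘ Sum.inl)) ⬝ᵥ X *ᵥ (P *ᵥ (w ∘ Sum.inl)))
        - 2 * w (Sum.inr ()) * (x ⬝ᵥ P *ᵥ (w ∘ Sum.inl)) + ξ * w (Sum.inr ()) ^ 2 := fun w => by
      have : f w = _ := (toLinearMap₂'_apply' _ w w).trans (hblock 0 w)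
      rw [this]
      ring
    have hg : ∀ w, g w = w (Sum.inr ()) ^ 2 - (w ∘ Sum.inl) ⬝ᵥ Qb *ᵥ (w ∘ Sum.inl) := fun w => by
      have : g w = _ := (toLinearMap₂'_apply' _ w w).trans
        (dotProduct_fromBlocks_unit_mulVec (-Qb) 0 1 w)
      rw [this, neg_mulVec, dotProduct_neg, zero_dotProduct]
      ring
    obtain ⟨lam, hlam, hle⟩ := QuadraticForm.exists_nonneg_mul_le f g (fun w hw => by
      rw [hg] at hw
      rw [hf]
      generalize w ∘ Sum.inl = z at *
      generalize w (Sum.inr ()) = t at *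
      rcases eq_or_ne t 0 with rfl | ht
      · have hz : z = 0 := by
          by_contra hz
          have := hQb.dotProduct_mulVec_pos hz
          simp only [star_trivial] at this
          linarith
        simp [hz]
      · have ht2 : 0 < t ^ 2 := by positivity
        have := h _ ⟨t⁻¹ • z, by
          rw [mulVec_smul, dotProduct_smul, smul_dotProduct, smul_eq_mul, smul_eq_mul]
          have : t⁻¹ * (t⁻¹ * (z ⬝ᵥ Qb *ᵥ z)) = (z ⬝ᵥ Qb *ᵥ z) / t ^ 2 := by field_simp
          rw [this, div_le_one ht2]
          linarith, rfl⟩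
        rw [mulVec_smul, mulVec_smul, dotProduct_smul, smul_dotProduct, dotProduct_smul,
          smul_eq_mul, smul_eq_mul, smul_eq_mul] at this
        have hmul := mul_le_mul_of_nonneg_right this ht2.le
        have hscale : ∀ p q : ℝ, (t⁻¹ * (t⁻¹ * p) + 2 * (t⁻¹ * q)) * t ^ 2 = p + 2 * t * q :=
          fun p q => by field_simp
        rw [hscale] at hmul
        linarith) ⟨Sum.elim 0 1, by rw [hg]; simp⟩
    refine ⟨lam, hlam, PosSemidef.of_dotProduct_mulVec_nonneg ?_ fun w => ?_⟩
    · have hQ : Qbᵀ = Qb := by simpa [IsHermitian] using hQb.isHermitian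
      refine IsHermitian.fromBlocks ?_ ?_ ?_
      · simp [IsHermitian, conjTranspose_eq_transpose_of_trivial, hQ, hX.eq, Matrix.mul_assoc]
      · ext i j
        simp
      · ext i j
        simp
    · have := hle w
      rw [hf, hg] at this
      rw [star_trivial, hblock]
      linarith
  · rintro ⟨lam, hlam, hpsd⟩ _ ⟨z, hz, rfl⟩
    have := hpsd.dotProduct_mulVec_nonneg (Sum.elim z 1)
    rw [star_trivial, hblock] at this
    simp only [Sum.elim_comp_inl, Sum.elim_inr, Pi.one_apply] at this
    nlinarith [mul_le_mul_of_nonneg_left hz hlam]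
end
end

section
/- Let K ≥ 1 be an integer, S_1,…,S_K symmetric positive semidefinite n̄×n̄ matrices with S_1+⋯+S_K positive definite, and 𝒯 ⊆ ℝ_{≥0}^K a nonempty convex compact monotone set containing a point with all coordinates positive. Let Q be a symmetric n̄×n̄ matrix, q ∈ ℝ^{n̄}, and Q_+ = [[Q, q],[qᵀ, 0]]. Define Opt[1] = inf{ φ_𝒯(λ) + μ : λ ∈ ℝ^K, λ ≥ 0, μ ≥ 0, Q_+ ⪯ BlockDiag(∑_k λ_k S_k, μ) }. Then Opt[1] = max{ Tr(QV) + 2qᵀv : V ∈ S^{n̄}, v ∈ ℝ^{n̄}, t ∈ 𝒯, Tr(S_k V) ≤ t_k for k = 1,…,K, [[V, v],[vᵀ, 1]] positive semidefinite }, and this maximum is attained. -/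
open Matrix BigOperators

noncomputable section

/-- The ellitope `𝒳[s]`: image under `z ↦ P z` of the set of `z` with
`zᵀ S_k z ≤ s t_k` for some `t ∈ 𝒯`. -/
def ellitope {n nb K : ℕ} (P : Matrix (Fin n) (Fin nb) ℝ)
    (S : Fin K → Matrix (Fin nb) (Fin nb) ℝ) (T : Set (Fin K → ℝ)) (s : ℝ) :
    Set (Fin n → ℝ) :=
  {x | ∃ z : Fin nb → ℝ, ∃ t ∈ T, x = P *ᵥ z ∧ ∀ k, z ⬝ᵥ (S k) *ᵥ z ≤ s * t k}

/-- Support function `φ_𝒯(λ) = max_{t ∈ 𝒯} λᵀ t`. -/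
def suppFn {K : ℕ} (T : Set (Fin K → ℝ)) (lam : Fin K → ℝ) : ℝ :=
  sSup ((fun t => ∑ k, lam k * t k) '' T)

/-- `Q_+ = [[Q, q],[qᵀ, 0]]`. -/
def qPlus {m : ℕ} (Q : Matrix (Fin m) (Fin m) ℝ) (q : Fin m → ℝ) :
    Matrix (Fin m ⊕ Unit) (Fin m ⊕ Unit) ℝ :=
  Matrix.fromBlocks Q (Matrix.of fun i _ => q i) (Matrix.of fun _ j => q j) 0

/-- `BlockDiag(M, μ)`. -/
def blockDiagOne {m : ℕ} (M : Matrix (Fin m) (Fin m) ℝ) (μ : ℝ) :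
    Matrix (Fin m ⊕ Unit) (Fin m ⊕ Unit) ℝ :=
  Matrix.fromBlocks M 0 0 (Matrix.of fun _ _ => μ)

theorem Matrix.PosSemidef.trace_mul_nonneg {n : Type*} [Fintype n] {A B : Matrix n n ℝ}
    (hA : A.PosSemidef) (hB : B.PosSemidef) : 0 ≤ (A * B).trace := by
  obtain ⟨m, a, rfl⟩ := Matrix.posSemidef_iff_eq_sum_vecMulVec.mp hA
  rw [Finset.sum_mul, Matrix.trace_sum]
  refine Finset.sum_nonneg fun i _ => ?_
  have := hB.dotProduct_mulVec_nonneg (a i)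
  rw [vecMulVec_mul, trace_vecMulVec, ← dotProduct_comm, ← dotProduct_mulVec]
  simpa using this

open scoped MatrixOrder in
theorem Matrix.PosDef.exists_pos_sub_smul_one_posSemidef {n : Type*} [Fintype n] [DecidableEq n]
    {A : Matrix n n ℝ} (hA : A.PosDef) : ∃ r > (0 : ℝ), (A - r • (1 : Matrix n n ℝ)).PosSemidef := by
  rcases isEmpty_or_nonempty n with h | h
  · exact ⟨1, one_pos, by rw [Subsingleton.elim (A - (1 : ℝ) • 1) 0]; exact .zero⟩
  obtain ⟨r, hr, h⟩ := (CFC.exists_pos_algebraMap_le_iff hA.isHermitian).2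
    (fun x hx => (isStrictlyPositive_iff_posDef.2 hA).spectrum_pos hx)
  exact ⟨r, hr, by rwa [Algebra.algebraMap_eq_smul_one, Matrix.le_iff] at h⟩

theorem Matrix.isClosed_setOf_posSemidef {n : Type*} [Fintype n] :
    IsClosed {A : Matrix n n ℝ | A.PosSemidef} := by
  simp only [posSemidef_iff_dotProduct_mulVec, Set.ofPred_and, Set.ofPred_forall]
  refine .inter (isClosed_eq (by fun_prop) continuous_id) (isClosed_iInter fun x => ?_)
  exact isClosed_le continuous_const (by fun_prop)

theorem Matrix.PosSemidef.abs_apply_le_trace {n : Type*} [Fintype n] [DecidableEq n]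
    {A : Matrix n n ℝ} (hA : A.PosSemidef) (i j : n) : |A i j| ≤ A.trace := by
  have hd : ∀ k, A k k ≤ A.trace := fun k =>
    Finset.single_le_sum (f := fun k => A k k) (fun l _ => hA.diag_nonneg) (Finset.mem_univ k)
  have hs : A j i = A i j := hA.isHermitian.apply i j
  have h1 := hA.dotProduct_mulVec_nonneg (Pi.single i 1 + Pi.single j 1)
  have h2 := hA.dotProduct_mulVec_nonneg (Pi.single i 1 - Pi.single j 1)
  simp [mulVec_add, mulVec_sub, add_dotProduct, sub_dotProduct] at h1 h2
  have := hd i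
  have := hd j
  rw [abs_le]
  constructor <;> linarith

theorem Matrix.PosDef.isCompact_posSemidef_trace_mul_le {n : Type*} [Fintype n] [DecidableEq n]
    {P : Matrix n n ℝ} (hP : P.PosDef) (R : ℝ) :
    IsCompact {W : Matrix n n ℝ | W.PosSemidef ∧ (P * W).trace ≤ R} := by
  obtain ⟨r, hr, h⟩ := hP.exists_pos_sub_smul_one_posSemidef
  have hK : IsCompact {W : Matrix n n ℝ | ∀ i j, W i j ∈ Set.Icc (-(R / r)) (R / r)} :=
    isCompact_pi_infinite (s := fun _ : n => {v : n → ℝ | ∀ j, v j ∈ Set.Icc (-(R / r)) (R / r)})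
      fun _ => isCompact_pi_infinite fun _ => isCompact_Icc
  refine hK.of_isClosed_subset ?_ ?_
  · exact isClosed_setOf_posSemidef.inter
      (isClosed_le (f := fun W : Matrix n n ℝ => (P * W).trace) (by fun_prop) continuous_const)
  · rintro W ⟨hW, hR⟩ i j
    have h1 := h.trace_mul_nonneg hW
    rw [sub_mul, trace_sub, smul_mul, one_mul, trace_smul, smul_eq_mul] at h1
    have h2 : W.trace ≤ R / r := by rw [le_div_iff₀ hr]; linarith
    exact abs_le.1 ((hW.abs_apply_le_trace i j).trans h2)

/-- The values `(u, s, r)` of the perturbations of the program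
`max {Tr(C W) : W ⪰ 0, t ∈ T, Tr(M_k W) ≤ t_k, Tr(E W) = 1}` for which `r` is an attainable lower
bound on the objective when the constraints are shifted by `u` and `s`. -/
def perturbationSet {ι n : Type*} [Fintype n] (M : ι → Matrix n n ℝ) (E C : Matrix n n ℝ)
    (T : Set (ι → ℝ)) : Set ((ι → ℝ) × ℝ × ℝ) :=
  {x | ∃ W : Matrix n n ℝ, ∃ t ∈ T, W.PosSemidef ∧ (∀ k, (M k * W).trace ≤ t k + x.1 k) ∧
    (E * W).trace = 1 + x.2.1 ∧ x.2.2 ≤ (C * W).trace}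

theorem convex_perturbationSet {ι n : Type*} [Fintype n] (M : ι → Matrix n n ℝ)
    (E C : Matrix n n ℝ) {T : Set (ι → ℝ)} (hT : Convex ℝ T) :
    Convex ℝ (perturbationSet M E C T) := by
  rintro x ⟨W, t, ht, hW, h1, h2, h3⟩ y ⟨W', t', ht', hW', h1', h2', h3'⟩ a b ha hb hab
  refine ⟨a • W + b • W', a • t + b • t', hT ht ht' ha hb hab, (hW.smul ha).add (hW'.smul hb),
    fun k => ?_, ?_, ?_⟩
  · have := mul_le_mul_of_nonneg_left (h1 k) ha
    have := mul_le_mul_of_nonneg_left (h1' k) hb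
    simp [mul_add]
    linarith
  · simp [mul_add, h2, h2']
    linear_combination hab
  · have := mul_le_mul_of_nonneg_left h3 ha
    have := mul_le_mul_of_nonneg_left h3' hb
    simp [mul_add]
    linarith

theorem isClosed_perturbationSet {ι n : Type*} [Fintype ι] [Fintype n] [DecidableEq n]
    {M : ι → Matrix n n ℝ} {E : Matrix n n ℝ} (C : Matrix n n ℝ) (hP : (∑ k, M k + E).PosDef)
    {T : Set (ι → ℝ)} (hT : IsCompact T) : IsClosed (perturbationSet M E C T) := by
  refine isClosed_of_closure_subset fun p hp => ?_
  set N := Metric.closedBall p 1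
  have hN : IsCompact N := isCompact_closedBall p 1
  obtain ⟨a, ha⟩ := (hN.image (f := fun x => ∑ k, x.1 k + x.2.1) (by fun_prop)).bddAbove
  obtain ⟨b, hb⟩ := (hT.image (f := fun t => ∑ k, t k) (by fun_prop)).bddAbove
  set B := {W : Matrix n n ℝ | W.PosSemidef ∧ ((∑ k, M k + E) * W).trace ≤ a + b + 1}
  set D := {z : ((ι → ℝ) × ℝ × ℝ) × Matrix n n ℝ × (ι → ℝ) |
    (∀ k, (M k * z.2.1).trace ≤ z.2.2 k + z.1.1 k) ∧
    (E * z.2.1).trace = 1 + z.1.2.1 ∧ z.1.2.2 ≤ (C * z.2.1).trace}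
  have hD : IsClosed D := by
    simp only [D, Set.ofPred_and, Set.ofPred_forall]
    refine .inter (isClosed_iInter fun k => isClosed_le ?_ ?_)
      (.inter (isClosed_eq ?_ ?_) (isClosed_le ?_ ?_))
    all_goals fun_prop
  have hK : IsCompact (Prod.fst '' ((N ×ˢ B ×ˢ T) ∩ D)) :=
    ((hN.prod ((hP.isCompact_posSemidef_trace_mul_le _).prod hT)).inter_right hD).image
      continuous_fst
  have hsub : perturbationSet M E C T ∩ N ⊆ Prod.fst '' ((N ×ˢ B ×ˢ T) ∩ D) := by
    rintro x ⟨⟨W, t, ht, hW, h1, h2, h3⟩, hx⟩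
    refine ⟨(x, W, t), ⟨⟨hx, ⟨hW, ?_⟩, ht⟩, h1, h2, h3⟩, rfl⟩
    have h4 := ha (Set.mem_image_of_mem _ hx)
    have h5 := hb (Set.mem_image_of_mem _ ht)
    have h6 := Finset.sum_le_sum fun k (_ : k ∈ Finset.univ) => h1 k
    rw [Finset.sum_add_distrib] at h6
    rw [add_mul, Finset.sum_mul, trace_add, trace_sum, h2]
    linarith
  have hp' : p ∈ closure (perturbationSet M E C T ∩ N) := by
    rw [mem_closure_iff_nhds] at hp ⊢
    intro U hU
    obtain ⟨x, ⟨hxU, hxN⟩, hx⟩ := hp _ (Filter.inter_mem hU (Metric.closedBall_mem_nhds p one_pos))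
    exact ⟨x, hxU, hx, hxN⟩
  obtain ⟨⟨_, W, t⟩, ⟨⟨-, hW, ht⟩, h1, h2, h3⟩, rfl⟩ := closure_minimal hsub hK.isClosed hp'
  exact ⟨W, t, ht, hW.1, h1, h2, h3⟩

theorem nonneg_of_forall_lt_add_mul {a b y : ℝ} (h : ∀ τ : ℝ, 0 ≤ τ → a < b + τ * y) : 0 ≤ y := by
  by_contra! hy
  have h0 := h 0 le_rfl
  have h1 := h ((b - a) / -y) (div_nonneg (by linarith) (by linarith))
  rw [div_mul_eq_mul_div, mul_div_assoc, div_neg, div_self hy.ne] at h1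
  linarith

theorem Matrix.trace_mul_vecMulVec_star {n : Type*} [Fintype n] (A : Matrix n n ℝ) (x : n → ℝ) :
    (A * vecMulVec x (star x)).trace = star x ⬝ᵥ A *ᵥ x := by
  rw [mul_vecMulVec, trace_vecMulVec, dotProduct_comm]

/-- Strong conic duality: an unattainable objective value `c` yields a dual feasible point of
value below `c`. -/
theorem exists_dual_lt {ι n : Type*} [Fintype ι] [Fintype n] [DecidableEq n]
    {M : ι → Matrix n n ℝ} {E C : Matrix n n ℝ} (hM : ∀ k, (M k).IsHermitian)
    (hE : E.IsHermitian) (hC : C.IsHermitian) (hP : (∑ k, M k + E).PosDef)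
    {T : Set (ι → ℝ)} (hTconv : Convex ℝ T) (hT : IsCompact T) {c r : ℝ}
    (hr : ((0, 0, r) : (ι → ℝ) × ℝ × ℝ) ∈ perturbationSet M E C T)
    (hc : ((0, 0, c) : (ι → ℝ) × ℝ × ℝ) ∉ perturbationSet M E C T) :
    ∃ lam : ι → ℝ, ∃ μ : ℝ, (∀ k, 0 ≤ lam k) ∧ (∑ k, lam k • M k + μ • E - C).PosSemidef ∧
      ∀ t ∈ T, ∑ k, lam k * t k + μ < c := by
  classical
  obtain ⟨f, a, hfc, hf⟩ := geometric_hahn_banach_point_closed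
    (convex_perturbationSet M E C hTconv) (isClosed_perturbationSet C hP hT) hc
  set y : ι → ℝ := fun k => f (Pi.single k 1, 0, 0)
  set m : ℝ := f (0, 1, 0)
  set ρ : ℝ := f (0, 0, 1)
  have hfx : ∀ u s v, f (u, s, v) = ∑ k, u k * y k + s * m + v * ρ := by
    intro u s v
    have : (u, s, v) = ∑ k, u k • ((Pi.single k 1, 0, 0) : (ι → ℝ) × ℝ × ℝ)
        + s • (0, 1, 0) + v • (0, 0, 1) := by
      ext <;> simp [Prod.fst_sum, Prod.snd_sum, Finset.sum_apply, Pi.single_apply]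
    rw [this]
    simp only [map_add, map_sum, map_smul, smul_eq_mul, y, m, ρ]
  have key : ∀ W : Matrix n n ℝ, W.PosSemidef → ∀ t ∈ T, ∀ d : ι → ℝ, (∀ k, 0 ≤ d k) →
      ∀ e : ℝ, 0 ≤ e → c * ρ < ∑ k, ((M k * W).trace - t k + d k) * y k
        + ((E * W).trace - 1) * m + ((C * W).trace - e) * ρ := by
    intro W hW t ht d hd e he
    have h1 := hfc.trans (hf (fun k => (M k * W).trace - t k + d k, (E * W).trace - 1,
      (C * W).trace - e) ⟨W, t, ht, hW, fun k => by linarith [hd k], by ring, by linarith⟩)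
    rw [hfx, hfx] at h1
    simpa using h1
  obtain ⟨W₀, t₀, ht₀, hW₀, h1, h2, h3⟩ := id hr
  have hy : ∀ k, 0 ≤ y k := fun k => by
    refine nonneg_of_forall_lt_add_mul (a := c * ρ) (b := ∑ k, ((M k * W₀).trace - t₀ k) * y k
      + ((E * W₀).trace - 1) * m + (C * W₀).trace * ρ) fun τ hτ => ?_
    have := key W₀ hW₀ t₀ ht₀ (Pi.single k τ)
      (fun j => by rw [Pi.single_apply]; split_ifs <;> simp [hτ]) 0 le_rfl
    simp only [add_mul _ _ (y _), Finset.sum_add_distrib, sub_zero] at this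
    simp only [Pi.single_apply, ite_mul, zero_mul, Finset.sum_ite_eq', Finset.mem_univ, if_true]
      at this
    linarith
  have hρ : ρ < 0 := by
    have h4 : 0 ≤ -ρ := by
      refine nonneg_of_forall_lt_add_mul (a := c * ρ) (b := ∑ k, ((M k * W₀).trace - t₀ k) * y k
        + ((E * W₀).trace - 1) * m + (C * W₀).trace * ρ) fun τ hτ => ?_
      have := key W₀ hW₀ t₀ ht₀ 0 (fun _ => le_rfl) τ hτ
      simp only [Pi.zero_apply, add_zero] at this
      linarith
    have h5 := hfc.trans (hf _ hr)
    rw [hfx, hfx] at h5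
    refine lt_of_le_of_ne (by linarith) fun h0 => ?_
    simp [h0] at h5
  have hhom : ∀ W : Matrix n n ℝ, W.PosSemidef →
      0 ≤ ∑ k, (M k * W).trace * y k + (E * W).trace * m + (C * W).trace * ρ := by
    intro W hW
    refine nonneg_of_forall_lt_add_mul (a := c * ρ) (b := -∑ k, t₀ k * y k - m) fun τ hτ => ?_
    have := key (τ • W) (hW.smul hτ) t₀ ht₀ 0 (fun _ => le_rfl) 0 le_rfl
    simp only [Pi.zero_apply, add_zero, sub_zero, mul_smul_comm, trace_smul, smul_eq_mul, sub_mul,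
      Finset.sum_sub_distrib, mul_assoc, ← Finset.mul_sum] at this
    linarith
  refine ⟨fun k => y k / -ρ, m / -ρ, fun k => div_nonneg (hy k) (by linarith), ?_, fun t ht => ?_⟩
  · refine .of_dotProduct_mulVec_nonneg ?_ fun x => ?_
    · refine .sub (.add ?_ (hE.smul (.all _))) hC
      exact isSelfAdjoint_sum _ fun k _ => (hM k).smul (.all _)
    · have h6 := div_nonneg (hhom _ (posSemidef_vecMulVec_self_star x)) (neg_pos.2 hρ).le
      rw [← trace_mul_vecMulVec_star, sub_mul, add_mul, Finset.sum_mul]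
      simp only [trace_sub, trace_add, trace_sum, smul_mul, trace_smul, smul_eq_mul]
      convert h6 using 1
      rw [add_div, add_div, Finset.sum_div, mul_div_assoc _ ρ, div_neg ρ, div_self hρ.ne,
        Finset.sum_congr rfl fun k _ => div_mul_eq_mul_div (y k) (-ρ) _]
      simp only [mul_comm (y _)]
      ring
  · have h7 := key 0 .zero t ht 0 (fun _ => le_rfl) 0 le_rfl
    simp at h7
    have h8 : ∑ k, y k / -ρ * t k = (∑ k, t k * y k) / -ρ := by
      rw [Finset.sum_div]
      exact Finset.sum_congr rfl fun k _ => by ring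
    rw [h8, ← add_div, div_lt_iff₀ (by linarith)]
    linarith

theorem exists_isGreatest_perturbationSet {ι n : Type*} [Fintype ι] [Fintype n] [DecidableEq n]
    {M : ι → Matrix n n ℝ} {E : Matrix n n ℝ} (C : Matrix n n ℝ) (hP : (∑ k, M k + E).PosDef)
    {T : Set (ι → ℝ)} (hT : IsCompact T) {r : ℝ}
    (hr : ((0, 0, r) : (ι → ℝ) × ℝ × ℝ) ∈ perturbationSet M E C T) :
    ∃ c, IsGreatest {c : ℝ | ((0, 0, c) : (ι → ℝ) × ℝ × ℝ) ∈ perturbationSet M E C T} c := by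
  have hcl : IsClosed {c : ℝ | ((0, 0, c) : (ι → ℝ) × ℝ × ℝ) ∈ perturbationSet M E C T} :=
    (isClosed_perturbationSet C hP hT).preimage (by fun_prop)
  obtain ⟨b, hb⟩ := (hT.image (f := fun t => ∑ k, t k) (by fun_prop)).bddAbove
  obtain ⟨a, ha⟩ := ((hP.isCompact_posSemidef_trace_mul_le (b + 1)).image
    (f := fun W => (C * W).trace) (by fun_prop)).bddAbove
  refine ⟨_, hcl.isGreatest_csSup ⟨r, hr⟩ ⟨a, ?_⟩⟩
  rintro c ⟨W, t, ht, hW, h1, h2, h3⟩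
  refine h3.trans (ha ⟨W, ⟨hW, ?_⟩, rfl⟩)
  have h5 := hb (Set.mem_image_of_mem _ ht)
  have h6 := Finset.sum_le_sum fun k (_ : k ∈ Finset.univ) => h1 k
  rw [add_mul, Finset.sum_mul, trace_add, trace_sum, h2]
  simp only [Pi.zero_apply, add_zero] at h5 h6 ⊢
  linarith

theorem isHermitian_blockDiagOne {m : ℕ} {M : Matrix (Fin m) (Fin m) ℝ} (hM : M.IsHermitian)
    (μ : ℝ) : (blockDiagOne M μ).IsHermitian :=
  hM.fromBlocks (by simp) (by ext; simp)

theorem isHermitian_qPlus {m : ℕ} {Q : Matrix (Fin m) (Fin m) ℝ} (hQ : Q.IsHermitian)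
    (q : Fin m → ℝ) : (qPlus Q q).IsHermitian :=
  hQ.fromBlocks (by ext; simp) (by simp)

theorem posDef_blockDiagOne {m : ℕ} {M : Matrix (Fin m) (Fin m) ℝ} (hM : M.PosDef) {μ : ℝ}
    (hμ : 0 < μ) : (blockDiagOne M μ).PosDef := by
  refine .of_dotProduct_mulVec_pos (isHermitian_blockDiagOne hM.isHermitian μ) fun x hx => ?_
  have h1 : star x ⬝ᵥ blockDiagOne M μ *ᵥ x =
      star (x ∘ Sum.inl) ⬝ᵥ M *ᵥ (x ∘ Sum.inl) + μ * x (Sum.inr ()) ^ 2 := by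
    rw [blockDiagOne, fromBlocks_mulVec]
    simp [dotProduct, mulVec]
    ring
  rw [h1]
  by_cases h : x ∘ Sum.inl = 0
  · have hr : x (Sum.inr ()) ≠ 0 := fun h0 => hx <| by
      ext (i | i)
      · exact congrFun h i
      · exact h0
    rw [h]
    simp only [star_zero, mulVec_zero, dotProduct_zero, zero_add]
    positivity
  · have := hM.dotProduct_mulVec_pos h
    positivity

theorem sum_smul_blockDiagOne {m : ℕ} {ι : Type*} [Fintype ι] (S : ι → Matrix (Fin m) (Fin m) ℝ)
    (lam : ι → ℝ) (μ : ℝ) :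
    ∑ k, lam k • blockDiagOne (S k) 0 + μ • blockDiagOne 0 1 =
      blockDiagOne (∑ k, lam k • S k) μ := by
  ext (i | i) (j | j) <;> simp [blockDiagOne, Matrix.sum_apply]

theorem trace_blockDiagOne_mul {m : ℕ} (M : Matrix (Fin m) (Fin m) ℝ) (μ : ℝ)
    (W : Matrix (Fin m ⊕ Unit) (Fin m ⊕ Unit) ℝ) :
    (blockDiagOne M μ * W).trace = (M * W.toBlocks₁₁).trace + μ * W (Sum.inr ()) (Sum.inr ()) := by
  simp [blockDiagOne, trace, mul_apply, toBlocks₁₁]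

theorem trace_qPlus_mul {m : ℕ} (Q : Matrix (Fin m) (Fin m) ℝ) (q : Fin m → ℝ)
    {W : Matrix (Fin m ⊕ Unit) (Fin m ⊕ Unit) ℝ} (hW : W.IsHermitian) :
    (qPlus Q q * W).trace =
      (Q * W.toBlocks₁₁).trace + 2 * (q ⬝ᵥ fun i => W (Sum.inl i) (Sum.inr ())) := by
  have h : ∀ i, W (Sum.inr ()) (Sum.inl i) = W (Sum.inl i) (Sum.inr ()) := fun i => hW.apply _ _
  simp [qPlus, trace, mul_apply, toBlocks₁₁, dotProduct, h, Finset.sum_add_distrib]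
  ring

theorem sum_mul_le_suppFn {K : ℕ} {T : Set (Fin K → ℝ)} (hT : IsCompact T) (lam : Fin K → ℝ)
    {t : Fin K → ℝ} (ht : t ∈ T) : ∑ k, lam k * t k ≤ suppFn T lam :=
  le_csSup (hT.image (f := fun t : Fin K → ℝ => ∑ k, lam k * t k) (by fun_prop)).bddAbove
    (Set.mem_image_of_mem _ ht)

theorem dualValues_eq_blockValues {nb K : ℕ} (S : Fin K → Matrix (Fin nb) (Fin nb) ℝ) (T : Set (Fin K → ℝ))
    (Q : Matrix (Fin nb) (Fin nb) ℝ) (q : Fin nb → ℝ) :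
    {v : ℝ | ∃ V : Matrix (Fin nb) (Fin nb) ℝ, ∃ w : Fin nb → ℝ, ∃ t ∈ T,
        V.IsSymm ∧ (∀ k, (S k * V).trace ≤ t k) ∧
        (Matrix.fromBlocks V (Matrix.of fun i (_ : Unit) => w i)
          (Matrix.of fun (_ : Unit) j => w j)
          (Matrix.of fun _ _ => (1 : ℝ))).PosSemidef ∧
        v = (Q * V).trace + 2 * (q ⬝ᵥ w)} =
    {v : ℝ | ∃ W : Matrix (Fin nb ⊕ Unit) (Fin nb ⊕ Unit) ℝ, ∃ t ∈ T, W.PosSemidef ∧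
        (∀ k, (blockDiagOne (S k) 0 * W).trace ≤ t k) ∧ (blockDiagOne 0 1 * W).trace = 1 ∧
        v = (qPlus Q q * W).trace} := by
  ext v
  constructor
  · rintro ⟨V, w, t, ht, -, hS, hW, rfl⟩
    refine ⟨_, t, ht, hW, fun k => ?_, ?_, ?_⟩
    · simpa [trace_blockDiagOne_mul] using hS k
    · simp [trace_blockDiagOne_mul]
    · rw [trace_qPlus_mul Q q hW.isHermitian]
      simp
  · rintro ⟨W, t, ht, hW, hS, h1, rfl⟩
    have h1' : W (Sum.inr ()) (Sum.inr ()) = 1 := by simpa [trace_blockDiagOne_mul] using h1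
    refine ⟨W.toBlocks₁₁, fun i => W (Sum.inl i) (Sum.inr ()), t, ht, ?_, fun k => ?_, ?_,
      trace_qPlus_mul Q q hW.isHermitian⟩
    · ext i j
      exact hW.isHermitian.apply _ _
    · simpa [trace_blockDiagOne_mul] using hS k
    · convert hW using 1
      ext (i | i) (j | j)
      · rfl
      · rfl
      · exact hW.isHermitian.apply _ _
      · exact h1'.symm

theorem stmt15 {nb K : ℕ} (hK : 1 ≤ K)
    (S : Fin K → Matrix (Fin nb) (Fin nb) ℝ)
    (hS : ∀ k, (S k).PosSemidef)
    (hSsum : (∑ k, S k).PosDef)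
    (T : Set (Fin K → ℝ))
    (hTne : T.Nonempty) (hTconv : Convex ℝ T) (hTcomp : IsCompact T)
    (hTnonneg : ∀ t ∈ T, ∀ k, 0 ≤ t k)
    (hTmono : ∀ t t' : Fin K → ℝ, (∀ k, 0 ≤ t k) → (∀ k, t k ≤ t' k) → t' ∈ T → t ∈ T)
    (hTpos : ∃ t ∈ T, ∀ k, 0 < t k)
    (Q : Matrix (Fin nb) (Fin nb) ℝ) (hQ : Q.IsSymm) (q : Fin nb → ℝ) :
    IsGreatest
      {v : ℝ | ∃ V : Matrix (Fin nb) (Fin nb) ℝ, ∃ w : Fin nb → ℝ, ∃ t ∈ T,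
        V.IsSymm ∧ (∀ k, (S k * V).trace ≤ t k) ∧
        (Matrix.fromBlocks V (Matrix.of fun i (_ : Unit) => w i)
          (Matrix.of fun (_ : Unit) j => w j)
          (Matrix.of fun _ _ => (1 : ℝ))).PosSemidef ∧
        v = (Q * V).trace + 2 * (q ⬝ᵥ w)}
      (sInf {v : ℝ | ∃ lam : Fin K → ℝ, ∃ μ : ℝ,
        (∀ k, 0 ≤ lam k) ∧ 0 ≤ μ ∧
        (blockDiagOne (∑ k, lam k • S k) μ - qPlus Q q).PosSemidef ∧
        v = suppFn T lam + μ}) := by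
  rw [dualValues_eq_blockValues]
  set M : Fin K → Matrix (Fin nb ⊕ Unit) (Fin nb ⊕ Unit) ℝ := fun k => blockDiagOne (S k) 0
  set E : Matrix (Fin nb ⊕ Unit) (Fin nb ⊕ Unit) ℝ := blockDiagOne 0 1
  set C := qPlus Q q
  have hP : (∑ k, M k + E).PosDef := by
    have h := sum_smul_blockDiagOne S 1 1
    simp only [Pi.one_apply, one_smul] at h
    exact h ▸ posDef_blockDiagOne hSsum one_pos
  obtain ⟨t₀, ht₀⟩ := hTne
  have h0 : ((0, 0, 0) : (Fin K → ℝ) × ℝ × ℝ) ∈ perturbationSet M E C T := by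
    refine ⟨E, t₀, ht₀, ?_, fun k => ?_, ?_, ?_⟩
    · have : E = diagonal (Sum.elim 0 1) := by
        ext (i | i) (j | j) <;> simp [E, blockDiagOne, diagonal_apply]
      rw [this]
      exact .diagonal (by rintro (i | i) <;> simp)
    · rw [trace_blockDiagOne_mul]
      simpa [E, blockDiagOne] using hTnonneg t₀ ht₀ k
    · rw [trace_blockDiagOne_mul]
      simp [E, blockDiagOne]
    · simp [C, E, trace, mul_apply, qPlus, blockDiagOne]
  obtain ⟨c, hc, hcub⟩ := exists_isGreatest_perturbationSet C hP hTcomp h0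
  obtain ⟨W, t, ht, hW, h1, h2, h3⟩ := id hc
  simp only [Pi.zero_apply, add_zero] at h1 h2 h3
  have hweak : ∀ W t, t ∈ T → W.PosSemidef → (∀ k, (M k * W).trace ≤ t k) → (E * W).trace = 1 →
      ∀ lam μ, (∀ k, 0 ≤ lam k) →
      (blockDiagOne (∑ k, lam k • S k) μ - C).PosSemidef → (C * W).trace ≤ suppFn T lam + μ := by
    intro W t ht hW h1 h2 lam μ hlam hpsd
    have h3 := hpsd.trace_mul_nonneg hW
    rw [← sum_smul_blockDiagOne, sub_mul, add_mul, Finset.sum_mul] at h3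
    simp only [trace_sub, trace_add, trace_sum, smul_mul, trace_smul, smul_eq_mul] at h3
    have h4 := Finset.sum_le_sum fun k (_ : k ∈ Finset.univ) =>
      mul_le_mul_of_nonneg_left (h1 k) (hlam k)
    have h5 := sum_mul_le_suppFn hTcomp lam ht
    rw [h2] at h3
    linarith
  have hstrong : ∀ d, c < d → ∃ lam : Fin K → ℝ, ∃ μ : ℝ, (∀ k, 0 ≤ lam k) ∧ 0 ≤ μ ∧
      (blockDiagOne (∑ k, lam k • S k) μ - C).PosSemidef ∧ suppFn T lam + μ ≤ d := by
    intro d hd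
    obtain ⟨lam, μ, hlam, hpsd, hlt⟩ := exists_dual_lt
      (fun k => isHermitian_blockDiagOne (hS k).isHermitian 0)
      (isHermitian_blockDiagOne isHermitian_zero 1) (isHermitian_qPlus hQ q) hP hTconv hTcomp hc
      (fun h => hd.not_ge (hcub h))
    rw [sum_smul_blockDiagOne] at hpsd
    refine ⟨lam, μ, hlam, ?_, hpsd, ?_⟩
    · simpa [blockDiagOne, qPlus] using hpsd.diag_nonneg (i := Sum.inr ())
    · rw [← le_sub_iff_add_le]
      refine csSup_le (Set.Nonempty.image _ ⟨t₀, ht₀⟩) ?_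
      rintro _ ⟨t, ht, rfl⟩
      linarith [hlt t ht]
  have hcW : c = (C * W).trace :=
    le_antisymm h3 (hcub ⟨W, t, ht, hW, by simpa using h1, by simpa using h2, le_rfl⟩)
  have hInf : sInf {v : ℝ | ∃ lam : Fin K → ℝ, ∃ μ : ℝ, (∀ k, 0 ≤ lam k) ∧ 0 ≤ μ ∧
      (blockDiagOne (∑ k, lam k • S k) μ - C).PosSemidef ∧ v = suppFn T lam + μ} = c := by
    have hlb : ∀ v ∈ {v : ℝ | ∃ lam : Fin K → ℝ, ∃ μ : ℝ, (∀ k, 0 ≤ lam k) ∧ 0 ≤ μ ∧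
        (blockDiagOne (∑ k, lam k • S k) μ - C).PosSemidef ∧ v = suppFn T lam + μ}, c ≤ v := by
      rintro v ⟨lam, μ, hlam, -, hpsd, rfl⟩
      exact hcW ▸ hweak W t ht hW h1 h2 lam μ hlam hpsd
    refine le_antisymm (le_of_forall_gt_imp_ge_of_dense fun d hd => ?_) (le_csInf ?_ hlb)
    · obtain ⟨lam, μ, hlam, hμ, hpsd, hle⟩ := hstrong d hd
      exact (csInf_le ⟨c, hlb⟩ ⟨lam, μ, hlam, hμ, hpsd, rfl⟩).trans hle
    · obtain ⟨lam, μ, hlam, hμ, hpsd, -⟩ := hstrong (c + 1) (lt_add_one c)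
      exact ⟨_, lam, μ, hlam, hμ, hpsd, rfl⟩
  rw [hInf]
  refine ⟨⟨W, t, ht, hW, h1, h2, hcW⟩, ?_⟩
  rintro _ ⟨W', t', ht', hW', h1', h2', rfl⟩
  exact hcub ⟨W', t', ht', hW', by simpa using h1', by simpa using h2', le_rfl⟩
end
end

section
/- Let K ≥ 1 be an integer; for each k ≤ K let f_k ≥ 1 and S^{k1},…,S^{k n̄} be symmetric f_k×f_k matrices defining S_k[z] = ∑_i z_i S^{ki}, such that z = 0 whenever S_k[z] = 0 for all k; let 𝒯 ⊆ ℝ_{≥0}^K be a nonempty convex compact monotone set containing a point with all coordinates positive. Let Q be a symmetric n̄×n̄ matrix, q ∈ ℝ^{n̄}, and Q_+ = [[Q, q],[qᵀ, 0]]. Define Opt[1] = inf{ φ_𝒯(λ[Λ]) + μ : Λ_k ∈ S^{f_k} positive semidefinite, μ ≥ 0, Q_+ ⪯ BlockDiag(∑_k 𝒮_k^*[Λ_k], μ) }. Then Opt[1] = max{ Tr(VQ) + 2vᵀq : V ∈ S^{n̄}, v ∈ ℝ^{n̄}, t ∈ 𝒯, 𝒮_k[V] ⪯ t_k·I_{f_k}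 for k = 1,…,K, [[V, v],[vᵀ, 1]] positive semidefinite }, and this maximum is attained. -/
open Matrix BigOperators

noncomputable section

/-- The spectratope `𝒳[s]`: image under `z ↦ P z` of the set of `z` such that
`S_k[z]² ⪯ s t_k I` for some `t ∈ 𝒯`, where `S_k[z] = ∑ i z_i S^{ki}`. -/
def spectratope {n nb K : ℕ} (f : Fin K → ℕ) (P : Matrix (Fin n) (Fin nb) ℝ)
    (Smat : (k : Fin K) → Fin nb → Matrix (Fin (f k)) (Fin (f k)) ℝ)
    (T : Set (Fin K → ℝ)) (s : ℝ) : Set (Fin n → ℝ) :=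
  {x | ∃ z : Fin nb → ℝ, ∃ t ∈ T, x = P *ᵥ z ∧
    ∀ k, ((s * t k) • (1 : Matrix (Fin (f k)) (Fin (f k)) ℝ)
            - (∑ i, z i • Smat k i) ^ 2).PosSemidef}

/-- `𝒮_k^*[Λ]`, the matrix with entries `Tr(Λ (S^{ki} S^{kj} + S^{kj} S^{ki})/2)`. -/
def calSstar {nb fk : ℕ} (Sm : Fin nb → Matrix (Fin fk) (Fin fk) ℝ)
    (Λ : Matrix (Fin fk) (Fin fk) ℝ) : Matrix (Fin nb) (Fin nb) ℝ :=
  Matrix.of fun i j => (Λ * ((1 / 2 : ℝ) • (Sm i * Sm j + Sm j * Sm i))).trace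

/-- `λ[Λ] = (Tr Λ_1, …, Tr Λ_K)`. -/
def lamOf {K : ℕ} {f : Fin K → ℕ}
    (Λ : (k : Fin K) → Matrix (Fin (f k)) (Fin (f k)) ℝ) : Fin K → ℝ :=
  fun k => (Λ k).trace

/-- `𝒮_k[V] = ∑_{i,j} V_{ij} (S^{ki} S^{kj} + S^{kj} S^{ki})/2`. -/
def calS {nb fk : ℕ} (Sm : Fin nb → Matrix (Fin fk) (Fin fk) ℝ)
    (V : Matrix (Fin nb) (Fin nb) ℝ) : Matrix (Fin fk) (Fin fk) ℝ :=
  ∑ i, ∑ j, V i j • ((1 / 2 : ℝ) • (Sm i * Sm j + Sm j * Sm i))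

section Multiplier

lemma le_of_forall_pos_sub_mul_le {a b c : ℝ} (h : ∀ ε > 0, a - ε * b ≤ c) : a ≤ c := by
  have ht : Filter.Tendsto (fun ε : ℝ => a - ε * b) (nhdsWithin 0 (Set.Ioi 0)) (nhds a) := by
    have : Continuous fun ε : ℝ => a - ε * b := by fun_prop
    simpa using (this.tendsto 0).mono_left nhdsWithin_le_nhds
  exact le_of_tendsto ht (eventually_nhdsWithin_of_forall fun ε hε => h ε hε)

lemma dotProduct_mulVec_eq_sum {m : Type*} [Fintype m] (M : Matrix m m ℝ) (x : m → ℝ) :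
    x ⬝ᵥ (M *ᵥ x) = ∑ i, ∑ j, M i j * (x i * x j) := by
  simp only [dotProduct, mulVec, Finset.mul_sum]
  exact Finset.sum_congr rfl fun i _ => Finset.sum_congr rfl fun j _ => by ring

lemma abs_dotProduct_mulVec_le {m : Type*} [Fintype m] (M : Matrix m m ℝ) (x : m → ℝ) :
    |x ⬝ᵥ (M *ᵥ x)| ≤ (∑ i, ∑ j, |M i j|) * (x ⬝ᵥ x) := by
  rw [dotProduct_mulVec_eq_sum, Finset.sum_mul]
  refine (Finset.abs_sum_le_sum_abs _ _).trans (Finset.sum_le_sum fun i _ => ?_)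
  rw [Finset.sum_mul]
  refine (Finset.abs_sum_le_sum_abs _ _).trans (Finset.sum_le_sum fun j _ => ?_)
  rw [abs_mul]
  refine mul_le_mul_of_nonneg_left ?_ (abs_nonneg _)
  have hcoord : ∀ l, x l * x l ≤ x ⬝ᵥ x := fun l =>
    Finset.single_le_sum (f := fun l => x l * x l) (fun l _ => mul_self_nonneg _)
      (Finset.mem_univ l)
  rw [abs_le]
  constructor
  · nlinarith [hcoord i, hcoord j, sq_nonneg (x i + x j)]
  · nlinarith [hcoord i, hcoord j, sq_nonneg (x i - x j)]

lemma posSemidef_iff_isSymm_forall {m : Type*} [Fintype m] {M : Matrix m m ℝ} :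
    M.PosSemidef ↔ M.IsSymm ∧ ∀ x, 0 ≤ x ⬝ᵥ (M *ᵥ x) := by
  simp [posSemidef_iff_dotProduct_mulVec, IsHermitian, Matrix.IsSymm,
    conjTranspose_eq_transpose_of_trivial]

variable {κ : Type*} {m : κ → Type*} [∀ k, Fintype (m k)]

/-- The `k`-th square block of a vector indexed by the entries of all blocks. -/
def entryBlock (N : (Σ k, m k × m k) → ℝ) (k : κ) : Matrix (m k) (m k) ℝ :=
  Matrix.of fun i j => N ⟨k, i, j⟩

variable {E : Type*} [AddCommGroup E] [Module ℝ E]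

/-- Strict lower set of the values `(obj y, G y)`, `y ∈ X`, in the semidefinite order. -/
def strictHypograph (X : Set E) (obj : E →ₗ[ℝ] ℝ) (G : ∀ k, E →ₗ[ℝ] Matrix (m k) (m k) ℝ) :
    Set (ℝ × ((Σ k, m k × m k) → ℝ)) :=
  {p | ∃ y ∈ X, ∃ ε > 0, p.1 < obj y ∧
    ∀ k x, ε * (x ⬝ᵥ x) ≤ x ⬝ᵥ ((G k y - entryBlock p.2 k) *ᵥ x)}

lemma convex_strictHypograph {X : Set E} (hX : Convex ℝ X) (obj : E →ₗ[ℝ] ℝ)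
    (G : ∀ k, E →ₗ[ℝ] Matrix (m k) (m k) ℝ) : Convex ℝ (strictHypograph X obj G) := by
  rintro ⟨r₁, N₁⟩ ⟨y₁, hy₁, ε₁, hε₁, hr₁, hN₁⟩ ⟨r₂, N₂⟩ ⟨y₂, hy₂, ε₂, hε₂, hr₂, hN₂⟩ a b ha hb hab
  refine ⟨a • y₁ + b • y₂, hX hy₁ hy₂ ha hb hab, a * ε₁ + b * ε₂, ?_, ?_, fun k x => ?_⟩
  · rcases ha.eq_or_lt with rfl | ha
    · obtain rfl : b = 1 := by linarith
      simpa
    · positivity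
  · simp only [Prod.smul_mk, Prod.mk_add_mk, smul_eq_mul, map_add, map_smul]
    simp only at hr₁ hr₂
    rcases ha.eq_or_lt with rfl | ha
    · obtain rfl : b = 1 := by linarith
      simpa
    · nlinarith
  · have hsplit : G k (a • y₁ + b • y₂) - entryBlock (a • N₁ + b • N₂) k
        = a • (G k y₁ - entryBlock N₁ k) + b • (G k y₂ - entryBlock N₂ k) := by
      ext i j
      simp [entryBlock]
      ring
    simp only [Prod.smul_mk, Prod.mk_add_mk, hsplit, add_mulVec, smul_mulVec, dotProduct_add,
      dotProduct_smul, smul_eq_mul]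
    nlinarith [mul_le_mul_of_nonneg_left (hN₁ k x) ha, mul_le_mul_of_nonneg_left (hN₂ k x) hb]

lemma isOpen_strictHypograph [Finite κ] (X : Set E) (obj : E →ₗ[ℝ] ℝ)
    (G : ∀ k, E →ₗ[ℝ] Matrix (m k) (m k) ℝ) : IsOpen (strictHypograph X obj G) := by
  rw [isOpen_iff_mem_nhds]
  rintro p₀ ⟨y, hy, ε, hε, hr, hN⟩
  have hclose : ∀ᶠ p : ℝ × ((Σ k, m k × m k) → ℝ) in nhds p₀, ∀ k : κ,
      ∑ i, ∑ j, |entryBlock p₀.2 k i j - entryBlock p.2 k i j| < ε / 2 := by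
    rw [Filter.eventually_all]
    intro k
    have hcont : Continuous fun p : ℝ × ((Σ k, m k × m k) → ℝ) =>
        ∑ i, ∑ j, |entryBlock p₀.2 k i j - entryBlock p.2 k i j| := by
      simp only [entryBlock, of_apply]
      fun_prop
    refine hcont.continuousAt.eventually_lt continuousAt_const ?_
    simpa using hε
  filter_upwards [hclose, continuousAt_fst.eventually_lt continuousAt_const hr] with p hp hpr
  refine ⟨y, hy, ε / 2, half_pos hε, hpr, fun k x => ?_⟩
  have hsplit : G k y - entryBlock p.2 k
      = (G k y - entryBlock p₀.2 k) + (entryBlock p₀.2 k - entryBlock p.2 k) := by abel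
  have hpert := (abs_le.1 (abs_dotProduct_mulVec_le (entryBlock p₀.2 k - entryBlock p.2 k) x)).1
  simp only [Matrix.sub_apply] at hpert
  have hxx : 0 ≤ x ⬝ᵥ x := Finset.sum_nonneg fun i _ => mul_self_nonneg _
  rw [hsplit, add_mulVec, dotProduct_add]
  nlinarith [hN k x, mul_le_mul_of_nonneg_right (hp k).le hxx]

lemma exists_posSemidef_multiplier [Fintype κ] [∀ k, DecidableEq (m k)] {X : Set E} (hX : Convex ℝ X)
    (obj : E →ₗ[ℝ] ℝ) (G : ∀ k, E →ₗ[ℝ] Matrix (m k) (m k) ℝ)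
    (hG : ∀ y ∈ X, ∀ k, (G k y).IsSymm) {c : ℝ}
    (hc : ∀ y ∈ X, (∀ k, (G k y).PosSemidef) → obj y ≤ c)
    {y₀ : E} (hy₀ : y₀ ∈ X) {δ : ℝ} (hδ : 0 < δ)
    (hslater : ∀ k x, δ * (x ⬝ᵥ x) ≤ x ⬝ᵥ (G k y₀ *ᵥ x)) :
    ∃ Λ : ∀ k, Matrix (m k) (m k) ℝ, (∀ k, (Λ k).PosSemidef) ∧
      ∀ y ∈ X, obj y + ∑ k, (Λ k * G k y).trace ≤ c := by
  classical
  have hself : ∀ {k : κ} (x : m k → ℝ), 0 ≤ x ⬝ᵥ x := fun x =>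
    Finset.sum_nonneg fun i _ => mul_self_nonneg _
  have hnot : (c, 0) ∉ strictHypograph X obj G := by
    rintro ⟨y, hy, ε, hε, hr, hN⟩
    refine hr.not_ge (hc y hy fun k => posSemidef_iff_isSymm_forall.2 ⟨hG y hy k, fun x => ?_⟩)
    have hzero : entryBlock (0 : (Σ k, m k × m k) → ℝ) k = 0 := rfl
    have := hN k x
    simp only [hzero, sub_zero] at this
    exact (mul_nonneg hε.le (hself x)).trans this
  obtain ⟨g, hg⟩ := geometric_hahn_banach_open_point (convex_strictHypograph hX obj G)
    (isOpen_strictHypograph X obj G) hnot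
  set α : ℝ := g (1, 0)
  set L : ∀ k, Matrix (m k) (m k) ℝ := fun k =>
    Matrix.of fun i j => g (0, fun p => if ⟨k, i, j⟩ = p then 1 else 0)
  have hgL : ∀ r N, g (r, N) = r * α + ∑ k, ∑ i, ∑ j, N ⟨k, i, j⟩ * L k i j := by
    intro r N
    have h₁ : ((r, N) : ℝ × ((Σ k, m k × m k) → ℝ)) = r • (1, 0) + (0, N) := by simp
    have h₂ := LinearMap.pi_apply_eq_sum_univ
      ((g : ℝ × ((Σ k, m k × m k) → ℝ) →ₗ[ℝ] ℝ).comp (LinearMap.inr ℝ ℝ _)) N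
    simp only [LinearMap.comp_apply, LinearMap.inr_apply, ContinuousLinearMap.coe_coe] at h₂
    rw [h₁, map_add, map_smul, smul_eq_mul, h₂, Fintype.sum_sigma]
    simp only [Fintype.sum_prod_type, smul_eq_mul]
    rfl
  have hgc : g (c, 0) = c * α := by simp [hgL]
  have hy₀c : obj y₀ ≤ c := hc y₀ hy₀ fun k => posSemidef_iff_isSymm_forall.2
    ⟨hG y₀ hy₀ k, fun x => (mul_nonneg hδ.le (hself x)).trans (hslater k x)⟩
  have hLquad : ∀ x : ∀ k, m k → ℝ, ∀ τ : ℝ, 0 ≤ τ →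
      (obj y₀ - 1) * α - τ * ∑ k, x k ⬝ᵥ (L k *ᵥ x k) < c * α := by
    intro x τ hτ
    have hmem : (obj y₀ - 1, fun p : Σ k, m k × m k => -τ * (x p.1 p.2.1 * x p.1 p.2.2))
        ∈ strictHypograph X obj G := by
      refine ⟨y₀, hy₀, δ, hδ, by simp, fun k u => ?_⟩
      have hblock : G k y₀ - entryBlock (fun p : Σ k, m k × m k =>
          -τ * (x p.1 p.2.1 * x p.1 p.2.2)) k = G k y₀ + τ • vecMulVec (x k) (x k) := by
        ext i j
        simp [entryBlock, vecMulVec_apply]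
      have hsq : u ⬝ᵥ (vecMulVec (x k) (x k) *ᵥ u) = (x k ⬝ᵥ u) * (x k ⬝ᵥ u) := by
        simp [vecMulVec_mulVec, dotProduct_comm u]
      simp only [hblock, add_mulVec, smul_mulVec, dotProduct_add, dotProduct_smul, hsq,
        smul_eq_mul]
      nlinarith [hslater k u, mul_nonneg hτ (mul_self_nonneg (x k ⬝ᵥ u))]
    have := hg _ hmem
    rw [hgc, hgL] at this
    refine lt_of_eq_of_lt ?_ this
    rw [sub_eq_add_neg, ← neg_mul, Finset.mul_sum]
    congr 1
    refine Finset.sum_congr rfl fun k _ => ?_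
    simp only [dotProduct_mulVec_eq_sum, Finset.mul_sum]
    exact Finset.sum_congr rfl fun i _ => Finset.sum_congr rfl fun j _ => by ring
  have hαpos : 0 < α := by
    have := hLquad 0 0 le_rfl
    by_contra hneg
    nlinarith
  have hLpos : ∀ k x, 0 ≤ x ⬝ᵥ (L k *ᵥ x) := by
    intro k x
    by_contra! hneg
    have hsum : ∑ l, (Pi.single k x : ∀ k, m k → ℝ) l ⬝ᵥ
        (L l *ᵥ (Pi.single k x : ∀ k, m k → ℝ) l) = x ⬝ᵥ (L k *ᵥ x) := by
      rw [Finset.sum_eq_single k]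
      · simp
      · intro l _ hl
        simp [Pi.single_eq_of_ne hl]
      · simp
    have hτ : 0 ≤ (c - obj y₀ + 1) * α / -(x ⬝ᵥ (L k *ᵥ x)) :=
      div_nonneg (mul_nonneg (by linarith) hαpos.le) (by linarith)
    have := hLquad (Pi.single k x) _ hτ
    rw [hsum, div_neg, neg_mul, div_mul_cancel₀ _ hneg.ne] at this
    linarith
  have hbound : ∀ y ∈ X, obj y * α + ∑ k, ∑ i, ∑ j, G k y i j * L k i j ≤ c * α := by
    intro y hy
    refine le_of_forall_pos_sub_mul_le
      (b := α + ∑ k, ∑ i, ∑ j, (1 : Matrix (m k) (m k) ℝ) i j * L k i j) fun ε hε => ?_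
    have hmem : (obj y - ε, fun p : Σ k, m k × m k =>
        G p.1 y p.2.1 p.2.2 - ε * (1 : Matrix (m p.1) (m p.1) ℝ) p.2.1 p.2.2)
        ∈ strictHypograph X obj G := by
      refine ⟨y, hy, ε, hε, by simpa using hε, fun k u => ?_⟩
      have hblock : G k y - entryBlock (fun p : Σ k, m k × m k =>
          G p.1 y p.2.1 p.2.2 - ε * (1 : Matrix (m p.1) (m p.1) ℝ) p.2.1 p.2.2) k
          = ε • (1 : Matrix (m k) (m k) ℝ) := by
        ext i j
        simp [entryBlock]
      simp only [hblock, smul_mulVec, one_mulVec, dotProduct_smul, smul_eq_mul, le_refl]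
    have := hg _ hmem
    rw [hgc, hgL] at this
    refine le_of_eq_of_le ?_ this.le
    simp only [sub_mul, Finset.sum_sub_distrib, mul_add, Finset.mul_sum, mul_assoc]
    ring
  refine ⟨fun k => (α⁻¹ * (1 / 2)) • (L k + (L k)ᵀ), fun k => ?_, fun y hy => ?_⟩
  · refine posSemidef_iff_isSymm_forall.2 ⟨?_, fun x => ?_⟩
    · simp [Matrix.IsSymm, add_comm]
    · have htr : x ⬝ᵥ ((L k)ᵀ *ᵥ x) = x ⬝ᵥ (L k *ᵥ x) := by
        rw [mulVec_transpose, dotProduct_comm, ← dotProduct_mulVec]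
      simp only [smul_mulVec, add_mulVec, dotProduct_smul, dotProduct_add, htr, smul_eq_mul]
      have := hLpos k x
      positivity
  · have htrace : ∀ k, (((α⁻¹ * (1 / 2)) • (L k + (L k)ᵀ)) * G k y).trace
        = α⁻¹ * ∑ i, ∑ j, G k y i j * L k i j := by
      intro k
      have h₁ : ((L k)ᵀ * G k y).trace = ∑ i, ∑ j, G k y i j * L k i j := by
        simp only [trace, diag_apply, mul_apply, transpose_apply]
        rw [Finset.sum_comm]
        exact Finset.sum_congr rfl fun i _ => Finset.sum_congr rfl fun j _ => mul_comm _ _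
      have h₂ : (L k * G k y).trace = ∑ i, ∑ j, G k y i j * L k i j := by
        rw [← h₁, ← trace_transpose, transpose_mul, (hG y hy k).eq, trace_mul_comm]
      rw [smul_mul, trace_smul, add_mul, trace_add, h₁, h₂, smul_eq_mul]
      ring
    simp only [htrace, ← Finset.mul_sum]
    have := hbound y hy
    rw [← mul_le_mul_iff_left₀ hαpos]
    refine le_of_eq_of_le ?_ this
    field_simp

end Multiplier

section Blocks

lemma posSemidef_bordered_iff {m : ℕ} (M : Matrix (Fin m) (Fin m) ℝ) (b : Fin m → ℝ) (c : ℝ) :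
    (Matrix.fromBlocks M (Matrix.of fun i (_ : Unit) => b i) (Matrix.of fun (_ : Unit) j => b j)
      (Matrix.of fun _ _ => c)).PosSemidef ↔
    M.IsSymm ∧ ∀ x s, 0 ≤ x ⬝ᵥ (M *ᵥ x) + 2 * s * (b ⬝ᵥ x) + c * s ^ 2 := by
  rw [posSemidef_iff_isSymm_forall]
  refine and_congr ?_ ?_
  · rw [Matrix.IsSymm, fromBlocks_transpose, fromBlocks_inj]
    exact ⟨fun h => h.1, fun h => ⟨h, rfl, rfl, rfl⟩⟩
  · have hquad : ∀ x (s : Unit → ℝ), (Sum.elim x s) ⬝ᵥ (Matrix.fromBlocks M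
        (Matrix.of fun i (_ : Unit) => b i) (Matrix.of fun (_ : Unit) j => b j)
        (Matrix.of fun _ _ => c) *ᵥ Sum.elim x s)
        = x ⬝ᵥ (M *ᵥ x) + 2 * s () * (b ⬝ᵥ x) + c * s () ^ 2 := by
      intro x s
      have hcol : (Matrix.of fun i (_ : Unit) => b i) *ᵥ s = s () • b := by
        ext i
        simp [mulVec, dotProduct, mul_comm]
      have hrow : (Matrix.of fun (_ : Unit) j => b j) *ᵥ x = fun _ => b ⬝ᵥ x := rfl
      have hcorner : (Matrix.of fun (_ _ : Unit) => c) *ᵥ s = fun _ => c * s () := by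
        ext i
        simp [mulVec, dotProduct]
      rw [fromBlocks_mulVec, sumElim_dotProduct_sumElim]
      simp only [Sum.elim_comp_inl, Sum.elim_comp_inr, hcol, hrow, hcorner, dotProduct_add,
        dotProduct_smul, smul_eq_mul, dotProduct_comm x b]
      simp only [dotProduct, Finset.univ_unique, Finset.sum_singleton, PUnit.default_eq_unit]
      ring
    constructor
    · intro h x s
      simpa [hquad] using h (Sum.elim x fun _ => s)
    · intro h x
      rw [← Sum.elim_comp_inl_inr x, hquad]
      exact h _ _

lemma blockDiagOne_sub_qPlus {m : ℕ} (M Q : Matrix (Fin m) (Fin m) ℝ) (q : Fin m → ℝ) (μ : ℝ) :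
    blockDiagOne M μ - qPlus Q q = Matrix.fromBlocks (M - Q) (Matrix.of fun i (_ : Unit) => (-q) i)
      (Matrix.of fun (_ : Unit) j => (-q) j) (Matrix.of fun _ _ => μ) := by
  ext (i | i) (j | j) <;> simp [blockDiagOne, qPlus]

open scoped MatrixOrder ComplexOrder in
lemma trace_mul_nonneg_of_posSemidef {m : Type*} [Fintype m] {A B : Matrix m m ℝ}
    (hA : A.PosSemidef) (hB : B.PosSemidef) : 0 ≤ (A * B).trace := by
  classical
  obtain ⟨C, rfl⟩ := CStarAlgebra.nonneg_iff_eq_star_mul_self.mp hA.nonneg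
  rw [mul_assoc, trace_mul_comm]
  exact (hB.mul_mul_conjTranspose_same C).trace_nonneg

lemma trace_bordered_mul {m : ℕ} (V M : Matrix (Fin m) (Fin m) ℝ) (w b : Fin m → ℝ) (μ : ℝ) :
    (Matrix.fromBlocks V (Matrix.of fun i (_ : Unit) => w i) (Matrix.of fun (_ : Unit) j => w j)
      (Matrix.of fun _ _ => 1) *
     Matrix.fromBlocks M (Matrix.of fun i (_ : Unit) => b i) (Matrix.of fun (_ : Unit) j => b j)
      (Matrix.of fun _ _ => μ)).trace = (V * M).trace + 2 * (w ⬝ᵥ b) + μ := by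
  rw [fromBlocks_multiply]
  simp only [trace, diag_apply, Fintype.sum_sum_type, fromBlocks_apply₁₁, fromBlocks_apply₂₂,
    Matrix.add_apply, mul_apply, of_apply, Finset.univ_unique, Finset.sum_singleton,
    Finset.sum_add_distrib, dotProduct, one_mul]
  ring

end Blocks

section Spectratopic

variable {nb fk : ℕ} {Sm : Fin nb → Matrix (Fin fk) (Fin fk) ℝ}

lemma calS_isSymm (hSm : ∀ i, (Sm i).IsSymm) (V : Matrix (Fin nb) (Fin nb) ℝ) :
    (calS Sm V).IsSymm := by
  simp only [Matrix.IsSymm, calS, transpose_sum, transpose_smul, transpose_add, transpose_mul,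
    (hSm _).eq]
  exact Finset.sum_congr rfl fun i _ => Finset.sum_congr rfl fun j _ => by rw [add_comm]

lemma calSstar_isSymm (Λ : Matrix (Fin fk) (Fin fk) ℝ) : (calSstar Sm Λ).IsSymm := by
  ext i j
  simp only [calSstar, transpose_apply, of_apply, add_comm]

lemma trace_mul_calS (Λ : Matrix (Fin fk) (Fin fk) ℝ) (V : Matrix (Fin nb) (Fin nb) ℝ) :
    (Λ * calS Sm V).trace = (V * calSstar Sm Λ).trace := by
  rw [← (calSstar_isSymm Λ).eq]
  simp only [calS, calSstar, Finset.mul_sum, trace_sum, mul_smul_comm, trace_smul]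
  simp only [trace, diag_apply, mul_apply, transpose_apply, of_apply, smul_eq_mul]

lemma calS_vecMulVec_self (z : Fin nb → ℝ) :
    calS Sm (vecMulVec z z) = (∑ i, z i • Sm i) * (∑ i, z i • Sm i) := by
  have hleft : (∑ i, z i • Sm i) * (∑ i, z i • Sm i)
      = ∑ i, ∑ j, (z i * z j) • (Sm i * Sm j) := by
    simp only [Finset.sum_mul, Finset.mul_sum, smul_mul_assoc, mul_smul_comm, smul_smul, Finset.smul_sum]
    rw [Finset.sum_comm]
    simp only [mul_comm]
  have hright : (∑ i, z i • Sm i) * (∑ i, z i • Sm i)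
      = ∑ i, ∑ j, (z i * z j) • (Sm j * Sm i) := by
    rw [hleft, Finset.sum_comm]
    simp only [mul_comm]
  have hhalf : (∑ i, z i • Sm i) * (∑ i, z i • Sm i)
      = (1 / 2 : ℝ) • ((∑ i, z i • Sm i) * (∑ i, z i • Sm i)
        + (∑ i, z i • Sm i) * (∑ i, z i • Sm i)) := by
    rw [← two_smul ℝ, smul_smul]; norm_num
  rw [hhalf]
  nth_rewrite 1 [hleft]
  rw [hright, ← Finset.sum_add_distrib, Finset.smul_sum]
  simp only [calS, vecMulVec_apply, ← Finset.sum_add_distrib, Finset.smul_sum, ← smul_add]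
  exact Finset.sum_congr rfl fun i _ => Finset.sum_congr rfl fun j _ => smul_comm _ _ _

lemma trace_vecMulVec_self_mul {m : ℕ} (M : Matrix (Fin m) (Fin m) ℝ) (z : Fin m → ℝ) :
    (vecMulVec z z * M).trace = z ⬝ᵥ (M *ᵥ z) := by
  rw [vecMulVec_mul, trace_vecMulVec, dotProduct_mulVec, dotProduct_comm]

lemma calS_add (V W : Matrix (Fin nb) (Fin nb) ℝ) : calS Sm (V + W) = calS Sm V + calS Sm W := by
  simp only [calS, Matrix.add_apply, add_smul, Finset.sum_add_distrib]

lemma calS_smul (a : ℝ) (V : Matrix (Fin nb) (Fin nb) ℝ) : calS Sm (a • V) = a • calS Sm V := by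
  simp only [calS, Matrix.smul_apply, smul_eq_mul, mul_smul, Finset.smul_sum]

lemma exists_pos_mul_le_of_forall_pos {m : ℕ} (M : Matrix (Fin m) (Fin m) ℝ)
    (hM : ∀ x, x ≠ 0 → 0 < x ⬝ᵥ (M *ᵥ x)) :
    ∃ δ > 0, ∀ x, δ * (x ⬝ᵥ x) ≤ x ⬝ᵥ (M *ᵥ x) := by
  have hcont : Continuous fun x : Fin m → ℝ => x ⬝ᵥ (M *ᵥ x) := by fun_prop
  have hcpt : IsCompact (Metric.sphere (0 : Fin m → ℝ) 1) := isCompact_sphere _ _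
  have hxx : ∀ x : Fin m → ℝ, x ≠ 0 → 0 < x ⬝ᵥ x := fun x hx => by
    simpa using dotProduct_star_self_pos_iff.2 hx
  have hcontd : ContinuousOn (fun x : Fin m → ℝ => (x ⬝ᵥ (M *ᵥ x)) / (x ⬝ᵥ x))
      (Metric.sphere 0 1) := by
    refine hcont.continuousOn.div (by fun_prop) fun x hx => (hxx x ?_).ne'
    exact ne_zero_of_mem_unit_sphere ⟨x, hx⟩
  rcases (Metric.sphere (0 : Fin m → ℝ) 1).eq_empty_or_nonempty with hemp | hne
  · refine ⟨1, one_pos, fun x => ?_⟩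
    obtain rfl : x = 0 := by
      by_contra hx
      have : ‖x‖⁻¹ • x ∈ Metric.sphere (0 : Fin m → ℝ) 1 := by
        simp [norm_smul, norm_ne_zero_iff.2 hx]
      simp [hemp] at this
    simp
  · obtain ⟨x₀, hx₀, hmin⟩ := hcpt.exists_isMinOn hne hcontd
    have hx₀ne : x₀ ≠ 0 := ne_zero_of_mem_unit_sphere ⟨x₀, hx₀⟩
    refine ⟨_, div_pos (hM x₀ hx₀ne) (hxx x₀ hx₀ne), fun x => ?_⟩
    rcases eq_or_ne x 0 with rfl | hx
    · simp
    have hmem : ‖x‖⁻¹ • x ∈ Metric.sphere (0 : Fin m → ℝ) 1 := by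
      simp [norm_smul, norm_ne_zero_iff.2 hx]
    have := hmin hmem
    simp only [Set.mem_ofPred_eq, mulVec_smul, dotProduct_smul, smul_dotProduct, smul_eq_mul] at this
    have hn : ‖x‖ ≠ 0 := norm_ne_zero_iff.2 hx
    rw [mul_div_mul_left _ _ (inv_ne_zero hn), mul_div_mul_left _ _ (inv_ne_zero hn)] at this
    exact (le_div_iff₀ (hxx x hx)).1 this

end Spectratopic

section Feasible

variable {nb K : ℕ} {f : Fin K → ℕ}

/-- Triples `(V, w, t)` with `t ∈ 𝒯` and `[[V, w], [wᵀ, 1]] ⪰ 0`. -/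
def momentSet (nb : ℕ) (T : Set (Fin K → ℝ)) :
    Set (Matrix (Fin nb) (Fin nb) ℝ × (Fin nb → ℝ) × (Fin K → ℝ)) :=
  {y | y.2.2 ∈ T ∧ y.1.IsSymm ∧
    ∀ x s, 0 ≤ x ⬝ᵥ (y.1 *ᵥ x) + 2 * s * (y.2.1 ⬝ᵥ x) + 1 * s ^ 2}

/-- The feasible triples `(V, w, t)` of the maximization problem. -/
def momentFeasible (Smat : (k : Fin K) → Fin nb → Matrix (Fin (f k)) (Fin (f k)) ℝ)
    (T : Set (Fin K → ℝ)) : Set (Matrix (Fin nb) (Fin nb) ℝ × (Fin nb → ℝ) × (Fin K → ℝ)) :=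
  {y ∈ momentSet nb T | ∀ k, (y.2.2 k • (1 : Matrix (Fin (f k)) (Fin (f k)) ℝ)
    - calS (Smat k) y.1).PosSemidef}

lemma convex_momentSet {T : Set (Fin K → ℝ)} (hT : Convex ℝ T) : Convex ℝ (momentSet nb T) := by
  rintro ⟨V₁, w₁, t₁⟩ ⟨ht₁, hV₁, h₁⟩ ⟨V₂, w₂, t₂⟩ ⟨ht₂, hV₂, h₂⟩ a b ha hb hab
  refine ⟨hT ht₁ ht₂ ha hb hab, ?_, fun x s => ?_⟩
  · simp only [Matrix.IsSymm] at hV₁ hV₂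
    simp [Matrix.IsSymm, hV₁, hV₂]
  · simp only [Prod.smul_mk, Prod.mk_add_mk, add_mulVec, smul_mulVec, dotProduct_add,
      dotProduct_smul, add_dotProduct, smul_dotProduct, smul_eq_mul]
    simp only at h₁ h₂
    obtain rfl : b = 1 - a := by linarith
    nlinarith [mul_nonneg ha (h₁ x s), mul_nonneg hb (h₂ x s)]

lemma vecMulVec_mem_momentSet {T : Set (Fin K → ℝ)} {t : Fin K → ℝ} (ht : t ∈ T)
    (w : Fin nb → ℝ) : (vecMulVec w w, w, t) ∈ momentSet nb T := by
  refine ⟨ht, ?_, fun x s => ?_⟩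
  · ext i j
    simp [vecMulVec_apply, mul_comm]
  · have hsq : x ⬝ᵥ (vecMulVec w w *ᵥ x) = (w ⬝ᵥ x) * (w ⬝ᵥ x) := by
      simp [vecMulVec_mulVec, dotProduct_comm x]
    simp only [hsq]
    nlinarith [sq_nonneg (w ⬝ᵥ x + s)]

lemma isClosed_momentFeasible (Smat : (k : Fin K) → Fin nb → Matrix (Fin (f k)) (Fin (f k)) ℝ)
    (hSm : ∀ k i, (Smat k i).IsSymm) {T : Set (Fin K → ℝ)} (hT : IsClosed T) :
    IsClosed (momentFeasible Smat T) := by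
  have hset : momentFeasible Smat T = {y | y.2.2 ∈ T} ∩ ({y | y.1ᵀ = y.1} ∩
      ((⋂ x, ⋂ s, {y | 0 ≤ x ⬝ᵥ (y.1 *ᵥ x) + 2 * s * (y.2.1 ⬝ᵥ x) + 1 * s ^ 2}) ∩
      ⋂ k, ⋂ x, {y | 0 ≤ x ⬝ᵥ ((y.2.2 k • (1 : Matrix (Fin (f k)) (Fin (f k)) ℝ)
        - calS (Smat k) y.1) *ᵥ x)})) := by
    ext y
    have hsymm : ∀ k, (calS (Smat k) y.1)ᵀ = calS (Smat k) y.1 := fun k =>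
      (calS_isSymm (hSm k) _).eq
    simp [momentFeasible, momentSet, posSemidef_iff_isSymm_forall, hsymm, Matrix.IsSymm,
      and_assoc]
  rw [hset]
  refine (hT.preimage (by fun_prop)).inter (IsClosed.inter ?_ (IsClosed.inter ?_ ?_))
  · exact isClosed_eq (by fun_prop) (by fun_prop)
  · exact isClosed_iInter fun x => isClosed_iInter fun s =>
      isClosed_le continuous_const (by fun_prop)
  · refine isClosed_iInter fun k => isClosed_iInter fun x => isClosed_le continuous_const ?_
    unfold calS
    fun_prop

lemma exists_trace_bound (Smat : (k : Fin K) → Fin nb → Matrix (Fin (f k)) (Fin (f k)) ℝ)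
    (hSm : ∀ k i, (Smat k i).IsSymm)
    (hnd : ∀ z : Fin nb → ℝ, (∀ k, (∑ i, z i • Smat k i) = 0) → z = 0)
    {T : Set (Fin K → ℝ)} (hT : IsCompact T) :
    ∃ R, ∀ y ∈ momentFeasible Smat T, y.1.trace ≤ R := by
  set M := ∑ k, calSstar (Smat k) (1 : Matrix (Fin (f k)) (Fin (f k)) ℝ) with hM
  have htrM : ∀ V, (V * M).trace = ∑ k, (calS (Smat k) V).trace := fun V => by
    simp only [hM, Finset.mul_sum, trace_sum, ← trace_mul_calS, one_mul]
  have hpos : ∀ z, z ≠ 0 → 0 < z ⬝ᵥ (M *ᵥ z) := by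
    intro z hz
    rw [← trace_vecMulVec_self_mul, htrM]
    have hSz : ∀ k, (calS (Smat k) (vecMulVec z z))
        = (∑ i, z i • Smat k i)ᴴ * (∑ i, z i • Smat k i) := fun k => by
      rw [calS_vecMulVec_self, conjTranspose_eq_transpose_of_trivial, transpose_sum]
      simp only [transpose_smul, (hSm k _).eq]
    have hnonneg : ∀ k, 0 ≤ (calS (Smat k) (vecMulVec z z)).trace := fun k => by
      rw [hSz]
      exact (posSemidef_conjTranspose_mul_self _).trace_nonneg
    refine (Finset.sum_nonneg fun k _ => hnonneg k).lt_of_ne' fun h0 => hz (hnd z fun k => ?_)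
    have := (Finset.sum_eq_zero_iff_of_nonneg fun k _ => hnonneg k).1 h0 k (Finset.mem_univ k)
    rwa [hSz, trace_conjTranspose_mul_self_eq_zero_iff] at this
  obtain ⟨δ, hδ, hδM⟩ := exists_pos_mul_le_of_forall_pos M hpos
  obtain ⟨C, hC⟩ := hT.bddAbove_image
    (f := fun t : Fin K → ℝ => ∑ k, t k * f k) (by fun_prop)
  refine ⟨C / δ, fun y hy => ?_⟩
  obtain ⟨⟨ht, hV, hblock⟩, hS⟩ := hy
  have hVpsd : y.1.PosSemidef := posSemidef_iff_isSymm_forall.2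
    ⟨hV, fun x => by simpa using hblock x 0⟩
  have hMsymm : M.IsSymm := by
    simp only [Matrix.IsSymm, hM, transpose_sum, (calSstar_isSymm _).eq]
  have hgap : (M - δ • (1 : Matrix (Fin nb) (Fin nb) ℝ)).PosSemidef :=
    posSemidef_iff_isSymm_forall.2 ⟨hMsymm.sub (isSymm_one.smul _), fun x => by
      simpa [sub_mulVec, smul_mulVec] using hδM x⟩
  have hlow := trace_mul_nonneg_of_posSemidef hVpsd hgap
  rw [mul_sub, trace_sub, mul_smul_comm, mul_one, trace_smul, smul_eq_mul, htrM] at hlow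
  have hup : ∑ k, (calS (Smat k) y.1).trace ≤ C := by
    refine le_trans (Finset.sum_le_sum fun k _ => ?_) (hC ⟨y.2.2, ht, rfl⟩)
    simpa [trace_sub, trace_smul] using (hS k).trace_nonneg
  rw [le_div_iff₀ hδ]
  linarith

lemma isCompact_momentFeasible (Smat : (k : Fin K) → Fin nb → Matrix (Fin (f k)) (Fin (f k)) ℝ)
    (hSm : ∀ k i, (Smat k i).IsSymm)
    (hnd : ∀ z : Fin nb → ℝ, (∀ k, (∑ i, z i • Smat k i) = 0) → z = 0)
    {T : Set (Fin K → ℝ)} (hT : IsCompact T) : IsCompact (momentFeasible Smat T) := by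
  obtain ⟨R, hR⟩ := exists_trace_bound Smat hSm hnd hT
  have hbox : IsCompact ((Set.univ.pi fun _ : Fin nb => Set.univ.pi fun _ : Fin nb =>
      Set.Icc (-R) R) ×ˢ ((Set.univ.pi fun _ : Fin nb => Set.Icc (-(R + 1)) (R + 1)) ×ˢ T)) :=
    (isCompact_univ_pi fun _ => isCompact_univ_pi fun _ => isCompact_Icc).prod
      ((isCompact_univ_pi fun _ => isCompact_Icc).prod hT)
  refine hbox.of_isClosed_subset (isClosed_momentFeasible Smat hSm hT.isClosed) ?_
  intro y hy
  have htr := hR y hy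
  obtain ⟨⟨ht, hV, hblock⟩, -⟩ := hy
  have hdiag : ∀ i, 0 ≤ y.1 i i := fun i => by
    simpa using hblock (Pi.single i 1) 0
  have hdiagR : ∀ i, y.1 i i ≤ R := fun i =>
    (Finset.single_le_sum (f := fun i => y.1 i i) (fun i _ => hdiag i) (Finset.mem_univ i)).trans htr
  refine ⟨fun i _ j _ => ?_, fun i _ => ?_, ht⟩
  · have hadd := hblock (Pi.single i 1 + Pi.single j 1) 0
    have hsub := hblock (Pi.single i 1 - Pi.single j 1) 0
    have hji := hV.apply i j
    simp [mulVec_add, mulVec_sub] at hadd hsub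
    constructor <;> linarith [hdiagR i, hdiagR j]
  · have hadd := hblock (Pi.single i 1) 1
    have hsub := hblock (Pi.single i 1) (-1)
    simp at hadd hsub
    constructor <;> linarith [hdiagR i, hdiag i]

end Feasible

section Duality

variable {nb K : ℕ} {f : Fin K → ℕ}
  {Smat : (k : Fin K) → Fin nb → Matrix (Fin (f k)) (Fin (f k)) ℝ} {T : Set (Fin K → ℝ)}

lemma le_suppFn (hT : IsCompact T) {t : Fin K → ℝ} (ht : t ∈ T) (lam : Fin K → ℝ) :
    ∑ k, lam k * t k ≤ suppFn T lam :=
  le_csSup (hT.bddAbove_image (by fun_prop)) ⟨t, ht, rfl⟩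

lemma exists_suppFn_eq (hT : IsCompact T) (hne : T.Nonempty) (lam : Fin K → ℝ) :
    ∃ t ∈ T, suppFn T lam = ∑ k, lam k * t k :=
  hT.exists_sSup_image_eq hne (by fun_prop)

lemma moment_objective_le_dual (hT : IsCompact T) {Q : Matrix (Fin nb) (Fin nb) ℝ}
    {q : Fin nb → ℝ} {y : Matrix (Fin nb) (Fin nb) ℝ × (Fin nb → ℝ) × (Fin K → ℝ)}
    (hy : y ∈ momentFeasible Smat T) {Λ : (k : Fin K) → Matrix (Fin (f k)) (Fin (f k)) ℝ} {μ : ℝ}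
    (hΛ : ∀ k, (Λ k).PosSemidef)
    (hdual : (blockDiagOne (∑ k, calSstar (Smat k) (Λ k)) μ - qPlus Q q).PosSemidef) :
    (y.1 * Q).trace + 2 * (y.2.1 ⬝ᵥ q) ≤ suppFn T (lamOf Λ) + μ := by
  obtain ⟨⟨ht, hV⟩, hS⟩ := hy
  rw [blockDiagOne_sub_qPlus] at hdual
  have hpair := trace_mul_nonneg_of_posSemidef ((posSemidef_bordered_iff _ _ _).2 hV) hdual
  rw [trace_bordered_mul, mul_sub, trace_sub, dotProduct_neg, Finset.mul_sum, trace_sum] at hpair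
  have hbound : ∑ k, (y.1 * calSstar (Smat k) (Λ k)).trace ≤ suppFn T (lamOf Λ) := by
    refine le_trans (Finset.sum_le_sum fun k _ => ?_) (le_suppFn hT ht _)
    have := trace_mul_nonneg_of_posSemidef (hΛ k) (hS k)
    rw [mul_sub, trace_sub, trace_mul_calS, mul_smul_comm, mul_one, trace_smul, smul_eq_mul] at this
    rw [lamOf]
    linarith
  linarith

/-- The objective `(V, w, t) ↦ Tr(VQ) + 2 wᵀq`. -/
def momentObjective (K : ℕ) (Q : Matrix (Fin nb) (Fin nb) ℝ) (q : Fin nb → ℝ) :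
    Matrix (Fin nb) (Fin nb) ℝ × (Fin nb → ℝ) × (Fin K → ℝ) →ₗ[ℝ] ℝ where
  toFun y := (y.1 * Q).trace + 2 * (y.2.1 ⬝ᵥ q)
  map_add' y y' := by
    simp only [Prod.fst_add, Prod.snd_add, add_mul, trace_add, add_dotProduct]
    ring
  map_smul' a y := by
    simp only [Prod.smul_fst, Prod.smul_snd, smul_mul_assoc, trace_smul, smul_dotProduct,
      smul_eq_mul, RingHom.id_apply]
    ring

/-- The constraint map `(V, w, t) ↦ t_k I - 𝒮_k[V]`. -/
def momentSlack (Smat : (k : Fin K) → Fin nb → Matrix (Fin (f k)) (Fin (f k)) ℝ) (k : Fin K) :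
    Matrix (Fin nb) (Fin nb) ℝ × (Fin nb → ℝ) × (Fin K → ℝ) →ₗ[ℝ]
      Matrix (Fin (f k)) (Fin (f k)) ℝ where
  toFun y := y.2.2 k • 1 - calS (Smat k) y.1
  map_add' y y' := by
    simp only [Prod.fst_add, Prod.snd_add, Pi.add_apply, add_smul, calS_add]
    abel
  map_smul' a y := by
    simp only [Prod.smul_fst, Prod.smul_snd, Pi.smul_apply, smul_eq_mul, mul_smul, smul_sub,
      calS_smul, RingHom.id_apply]

lemma exists_slater (Smat : (k : Fin K) → Fin nb → Matrix (Fin (f k)) (Fin (f k)) ℝ)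
    (hTpos : ∃ t ∈ T, ∀ k, 0 < t k) :
    ∃ y ∈ momentSet nb T, ∃ δ > 0, ∀ k x, δ * (x ⬝ᵥ x) ≤ x ⬝ᵥ (momentSlack Smat k y *ᵥ x) := by
  obtain ⟨t, ht, htpos⟩ := hTpos
  obtain ⟨δ, hδ, hδt⟩ : ∃ δ > 0, ∀ k, δ ≤ t k := by
    rcases isEmpty_or_nonempty (Fin K) with h | h
    · exact ⟨1, one_pos, fun k => h.elim k⟩
    · obtain ⟨k₀, hk₀⟩ := Finite.exists_min t
      exact ⟨t k₀, htpos k₀, hk₀⟩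
  refine ⟨(vecMulVec 0 0, 0, t), vecMulVec_mem_momentSet ht 0, δ, hδ, fun k x => ?_⟩
  have hxx : 0 ≤ x ⬝ᵥ x := Finset.sum_nonneg fun i _ => mul_self_nonneg _
  have hslack : momentSlack Smat k (vecMulVec 0 0, 0, t) = t k • 1 := by
    simp [momentSlack, calS]
  rw [hslack, smul_mulVec, one_mulVec, dotProduct_smul, smul_eq_mul]
  exact mul_le_mul_of_nonneg_right (hδt k) hxx

lemma forall_homogenized_nonneg {m : ℕ} {A : Matrix (Fin m) (Fin m) ℝ} {b : Fin m → ℝ} {c : ℝ}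
    (h : ∀ w, 0 ≤ w ⬝ᵥ (A *ᵥ w) + 2 * (b ⬝ᵥ w) + c) (x : Fin m → ℝ) (s : ℝ) :
    0 ≤ x ⬝ᵥ (A *ᵥ x) + 2 * s * (b ⬝ᵥ x) + c * s ^ 2 := by
  have hne : ∀ s : ℝ, s ≠ 0 → 0 ≤ x ⬝ᵥ (A *ᵥ x) + 2 * s * (b ⬝ᵥ x) + c * s ^ 2 := by
    intro s hs
    have hw := mul_nonneg (sq_nonneg s) (h (s⁻¹ • x))
    simp only [mulVec_smul, dotProduct_smul, smul_dotProduct, smul_eq_mul] at hw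
    refine hw.trans_eq ?_
    field_simp
  have hcont : Continuous fun s : ℝ => x ⬝ᵥ (A *ᵥ x) + 2 * s * (b ⬝ᵥ x) + c * s ^ 2 := by
    fun_prop
  have hclosed : IsClosed {s : ℝ | 0 ≤ x ⬝ᵥ (A *ᵥ x) + 2 * s * (b ⬝ᵥ x) + c * s ^ 2} :=
    isClosed_le continuous_const hcont
  exact hclosed.closure_subset_iff.2 (fun s hs => hne s hs) (dense_compl_singleton (0 : ℝ) s)

lemma exists_dual_le (hSm : ∀ k i, (Smat k i).IsSymm) (hTne : T.Nonempty) (hTconv : Convex ℝ T)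
    (hTcomp : IsCompact T) (hTpos : ∃ t ∈ T, ∀ k, 0 < t k) {Q : Matrix (Fin nb) (Fin nb) ℝ}
    (hQ : Q.IsSymm) {q : Fin nb → ℝ} {c : ℝ}
    (hc : ∀ y ∈ momentFeasible Smat T, (y.1 * Q).trace + 2 * (y.2.1 ⬝ᵥ q) ≤ c) :
    ∃ Λ : (k : Fin K) → Matrix (Fin (f k)) (Fin (f k)) ℝ, ∃ μ : ℝ,
      (∀ k, (Λ k).PosSemidef) ∧ 0 ≤ μ ∧
      (blockDiagOne (∑ k, calSstar (Smat k) (Λ k)) μ - qPlus Q q).PosSemidef ∧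
      c = suppFn T (lamOf Λ) + μ := by
  obtain ⟨y₀, hy₀, δ, hδ, hslater⟩ := exists_slater Smat hTpos
  obtain ⟨Λ, hΛ, hLag⟩ := exists_posSemidef_multiplier (convex_momentSet hTconv)
    (momentObjective K Q q) (momentSlack Smat)
    (fun y _ k => (isSymm_one.smul _).sub (calS_isSymm (hSm k) _))
    (fun y hy hS => hc y ⟨hy, hS⟩) hy₀ hδ hslater
  obtain ⟨t, ht, hφ⟩ := exists_suppFn_eq hTcomp hTne (lamOf Λ)
  have hquad : ∀ w, 0 ≤ w ⬝ᵥ ((∑ k, calSstar (Smat k) (Λ k) - Q) *ᵥ w) + 2 * ((-q) ⬝ᵥ w)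
      + (c - suppFn T (lamOf Λ)) := by
    intro w
    have hw := hLag _ (vecMulVec_mem_momentSet ht w)
    have hslack : ∑ k, (Λ k * momentSlack Smat k (vecMulVec w w, w, t)).trace
        = suppFn T (lamOf Λ) - w ⬝ᵥ ((∑ k, calSstar (Smat k) (Λ k)) *ᵥ w) := by
      rw [← trace_vecMulVec_self_mul, Finset.mul_sum, trace_sum, hφ, ← Finset.sum_sub_distrib]
      refine Finset.sum_congr rfl fun k _ => ?_
      simp only [momentSlack, LinearMap.coe_mk, AddHom.coe_mk, mul_sub, trace_sub, trace_mul_calS,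
        mul_smul_comm, mul_one, trace_smul, smul_eq_mul, lamOf]
      ring
    rw [hslack] at hw
    simp only [momentObjective, LinearMap.coe_mk, AddHom.coe_mk, trace_vecMulVec_self_mul] at hw
    rw [sub_mulVec, dotProduct_sub, neg_dotProduct, dotProduct_comm q]
    linarith
  refine ⟨Λ, c - suppFn T (lamOf Λ), hΛ, by simpa using hquad 0, ?_, by ring⟩
  rw [blockDiagOne_sub_qPlus, posSemidef_bordered_iff]
  refine ⟨Matrix.IsSymm.sub ?_ hQ, forall_homogenized_nonneg hquad⟩
  simp only [Matrix.IsSymm, transpose_sum, (calSstar_isSymm _).eq]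

end Duality

theorem stmt16 {nb K : ℕ} (hK : 1 ≤ K)
    (f : Fin K → ℕ) (hf : ∀ k, 1 ≤ f k)
    (Smat : (k : Fin K) → Fin nb → Matrix (Fin (f k)) (Fin (f k)) ℝ)
    (hSm : ∀ k i, (Smat k i).IsSymm)
    (hnd : ∀ z : Fin nb → ℝ, (∀ k, (∑ i, z i • Smat k i) = 0) → z = 0)
    (T : Set (Fin K → ℝ))
    (hTne : T.Nonempty) (hTconv : Convex ℝ T) (hTcomp : IsCompact T)
    (hTnonneg : ∀ t ∈ T, ∀ k, 0 ≤ t k)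
    (hTmono : ∀ t t' : Fin K → ℝ, (∀ k, 0 ≤ t k) → (∀ k, t k ≤ t' k) → t' ∈ T → t ∈ T)
    (hTpos : ∃ t ∈ T, ∀ k, 0 < t k)
    (Q : Matrix (Fin nb) (Fin nb) ℝ) (hQ : Q.IsSymm) (q : Fin nb → ℝ) :
    IsGreatest
      {v : ℝ | ∃ V : Matrix (Fin nb) (Fin nb) ℝ, ∃ w : Fin nb → ℝ, ∃ t ∈ T,
        V.IsSymm ∧
        (∀ k, (t k • (1 : Matrix (Fin (f k)) (Fin (f k)) ℝ)
                - calS (Smat k) V).PosSemidef) ∧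
        (Matrix.fromBlocks V (Matrix.of fun i (_ : Unit) => w i)
          (Matrix.of fun (_ : Unit) j => w j)
          (Matrix.of fun _ _ => (1 : ℝ))).PosSemidef ∧
        v = (V * Q).trace + 2 * (w ⬝ᵥ q)}
      (sInf {v : ℝ | ∃ Λ : (k : Fin K) → Matrix (Fin (f k)) (Fin (f k)) ℝ, ∃ μ : ℝ,
        (∀ k, (Λ k).PosSemidef) ∧ 0 ≤ μ ∧
        (blockDiagOne (∑ k, calSstar (Smat k) (Λ k)) μ - qPlus Q q).PosSemidef ∧
        v = suppFn T (lamOf Λ) + μ}) := by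
  have hcomp := isCompact_momentFeasible Smat hSm hnd hTcomp
  have hne : (momentFeasible Smat T).Nonempty := by
    obtain ⟨y, hy, δ, hδ, hslater⟩ := exists_slater Smat hTpos
    refine ⟨y, hy, fun k => posSemidef_iff_isSymm_forall.2
      ⟨(isSymm_one.smul _).sub (calS_isSymm (hSm k) _), fun x => ?_⟩⟩
    exact (mul_nonneg hδ.le (Finset.sum_nonneg fun i _ => mul_self_nonneg _)).trans (hslater k x)
  have hcont : Continuous fun y : Matrix (Fin nb) (Fin nb) ℝ × (Fin nb → ℝ) × (Fin K → ℝ) =>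
      (y.1 * Q).trace + 2 * (y.2.1 ⬝ᵥ q) := by fun_prop
  obtain ⟨y, hy, hmax⟩ := hcomp.exists_isMaxOn hne hcont.continuousOn
  have hdual := exists_dual_le (Smat := Smat) hSm hTne hTconv hTcomp hTpos hQ
    (fun z hz => hmax hz)
  have hleast : IsLeast {v : ℝ | ∃ Λ : (k : Fin K) → Matrix (Fin (f k)) (Fin (f k)) ℝ, ∃ μ : ℝ,
        (∀ k, (Λ k).PosSemidef) ∧ 0 ≤ μ ∧
        (blockDiagOne (∑ k, calSstar (Smat k) (Λ k)) μ - qPlus Q q).PosSemidef ∧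
        v = suppFn T (lamOf Λ) + μ} ((y.1 * Q).trace + 2 * (y.2.1 ⬝ᵥ q)) := by
    refine ⟨hdual, ?_⟩
    rintro _ ⟨Λ, μ, hΛ, -, hpsd, rfl⟩
    exact moment_objective_le_dual hTcomp hy hΛ hpsd
  rw [hleast.csInf_eq]
  constructor
  · exact ⟨y.1, y.2.1, y.2.2, hy.1.1, hy.1.2.1, hy.2, (posSemidef_bordered_iff _ _ _).2 hy.1.2, rfl⟩
  · rintro _ ⟨V, w, t, ht, -, hS, hblock, rfl⟩
    exact hmax (show (V, w, t) ∈ momentFeasible Smat T from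
      ⟨⟨ht, (posSemidef_bordered_iff _ _ _).1 hblock⟩, hS⟩)
end
end
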